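/- Let M(i,j) and M(i′,j′) be non-isomorphic indecomposable representations of Q. Then M(i,j) ⊕ M(i′,j′) is almost rigid if and only if the segments γ(i−1, j) and γ(i′−1, j′) do not cross in P(Q). -/

import Mathlib

open scoped Classical

noncomputable section

namespace CambrianA

/-! ### Combinatorics of a type `A_{n+2}` quiver.

Vertices are `1, …, n+2`.  For `1 ≤ i ≤ n+1`, `ε i = true` means that the arrow between
`i` and `i+1` is oriented `i → i+1` (`i` is *upper-barred*), and `ε i = false` means it is
oriented `(i+1) → i` (`i` is *lower-barred*). -/

/-- `MaxIncr n ε i j` : the path `i → i+1 → ⋯ → j` is a maximal increasing path of `Q`. -/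
def MaxIncr (n : ℕ) (ε : ℕ → Bool) (i j : ℕ) : Prop :=
  1 ≤ i ∧ i ≤ j ∧ j ≤ n + 2 ∧ (∀ ℓ, i ≤ ℓ → ℓ < j → ε ℓ = true) ∧
    (i = 1 ∨ ε (i - 1) = false) ∧ (j = n + 2 ∨ ε j = false)

/-- `MaxDecr n ε i j` : the path `i → i-1 → ⋯ → j` is a maximal decreasing path of `Q`. -/
def MaxDecr (n : ℕ) (ε : ℕ → Bool) (i j : ℕ) : Prop :=
  1 ≤ j ∧ j ≤ i ∧ i ≤ n + 2 ∧ (∀ ℓ, j ≤ ℓ → ℓ < i → ε ℓ = false) ∧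
    (i = n + 2 ∨ ε i = true) ∧ (j = 1 ∨ ε (j - 1) = true)

/-- Vertices of the polygon lying on the lower boundary: `0`, `n+2` and lower-barred ones. -/
def LowerVertex (n : ℕ) (ε : ℕ → Bool) (x : ℕ) : Prop :=
  x = 0 ∨ x = n + 2 ∨ (1 ≤ x ∧ x ≤ n + 1 ∧ ε x = false)

/-- Vertices of the polygon lying on the upper boundary: `0`, `n+2` and upper-barred ones. -/
def UpperVertex (n : ℕ) (ε : ℕ → Bool) (x : ℕ) : Prop :=
  x = 0 ∨ x = n + 2 ∨ (1 ≤ x ∧ x ≤ n + 1 ∧ ε x = true)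

/-- `(a,b)` is a lower boundary edge: `a < b` are consecutive lower vertices. -/
def LowerEdge (n : ℕ) (ε : ℕ → Bool) (a b : ℕ) : Prop :=
  LowerVertex n ε a ∧ LowerVertex n ε b ∧ a < b ∧
    ∀ c, LowerVertex n ε c → ¬(a < c ∧ c < b)

/-- `(a,b)` is an upper boundary edge: `a < b` are consecutive upper vertices. -/
def UpperEdge (n : ℕ) (ε : ℕ → Bool) (a b : ℕ) : Prop :=
  UpperVertex n ε a ∧ UpperVertex n ε b ∧ a < b ∧
    ∀ c, UpperVertex n ε c → ¬(a < c ∧ c < b)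

def BoundaryEdge (n : ℕ) (ε : ℕ → Bool) (a b : ℕ) : Prop :=
  LowerEdge n ε a b ∨ UpperEdge n ε a b

/-- `IsHook n ε a lo hi` : the hook of the arrow of `Q` between `a` and `a+1` is the
maximal path supported on the interval `[lo, hi]`.
If `ε a = true` (arrow `a → a+1`, source `a`), the hook is the maximal decreasing path
starting at `a`; if `ε a = false` (arrow `a+1 → a`, source `a+1`), the hook is the
maximal increasing path starting at `a+1`. -/
def IsHook (n : ℕ) (ε : ℕ → Bool) (a lo hi : ℕ) : Prop :=
  if ε a = true then
    hi = a ∧ 1 ≤ lo ∧ lo ≤ a ∧ (∀ ℓ, lo ≤ ℓ → ℓ < a → ε ℓ = false) ∧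
      (lo = 1 ∨ ε (lo - 1) = true)
  else
    lo = a + 1 ∧ a + 1 ≤ hi ∧ hi ≤ n + 2 ∧ (∀ ℓ, a + 1 ≤ ℓ → ℓ < hi → ε ℓ = true) ∧
      (hi = n + 2 ∨ ε hi = false)

/-- `IsCohook n ε a lo hi` : the cohook of the arrow of `Q` between `a` and `a+1` is the
maximal path supported on the interval `[lo, hi]`, ending at the target of the arrow. -/
def IsCohook (n : ℕ) (ε : ℕ → Bool) (a lo hi : ℕ) : Prop :=
  if ε a = true then
    lo = a + 1 ∧ a + 1 ≤ hi ∧ hi ≤ n + 2 ∧ (∀ ℓ, a + 1 ≤ ℓ → ℓ < hi → ε ℓ = false) ∧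
      (hi = n + 2 ∨ ε hi = true)
  else
    hi = a ∧ 1 ≤ lo ∧ lo ≤ a ∧ (∀ ℓ, lo ≤ ℓ → ℓ < a → ε ℓ = true) ∧
      (lo = 1 ∨ ε (lo - 1) = false)

/-- Counterclockwise neighbor `R⁻¹(ℓ)` of the vertex `ℓ` of the polygon `P(Q)`, for the
cyclic order `0`, lower-barred vertices increasing, `n+2`, upper-barred vertices
decreasing. -/
def Rinv (n : ℕ) (ε : ℕ → Bool) (ℓ : ℕ) : ℕ :=
  if ℓ = n + 2 then sSup ({0} ∪ {x | 1 ≤ x ∧ x ≤ n + 1 ∧ ε x = true})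
  else if 1 ≤ ℓ ∧ ℓ ≤ n + 1 ∧ ε ℓ = true then
    sSup ({0} ∪ {x | 1 ≤ x ∧ x < ℓ ∧ ε x = true})
  else
    sInf ({n + 2} ∪ {x | ℓ < x ∧ x ≤ n + 1 ∧ ε x = false})

/-- `γ(i′,j′)` is a pivot of `γ(i,j)`. -/
def IsPivot (n : ℕ) (ε : ℕ → Bool) (i j i' j' : ℕ) : Prop :=
  (i' = Rinv n ε i ∧ j' = j ∧ Rinv n ε i < j) ∨
    (i' = i ∧ j' = Rinv n ε j ∧ i < Rinv n ε j)

/-! ### Geometry of the polygon `P(Q)`.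

The plane is identified with `ℂ`; `p x` is the vertex of the polygon labeled `x`,
for `0 ≤ x ≤ n+2`. -/

/-- The hypotheses on the points `p 0, …, p (n+2)` realizing the polygon `P(Q)`:
strictly increasing `x`-coordinates; `p 0` and `p (n+2)` on a common horizontal line `L`;
upper-barred vertices above `L`, lower-barred vertices below `L`; convex position. -/
def PolyPts (n : ℕ) (ε : ℕ → Bool) (p : ℕ → ℂ) : Prop :=
  (∀ a b, a < b → b ≤ n + 2 → (p a).re < (p b).re) ∧
    (p (n + 2)).im = (p 0).im ∧
    (∀ i, 1 ≤ i → i ≤ n + 1 →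
      (ε i = true → (p 0).im < (p i).im) ∧ (ε i = false → (p i).im < (p 0).im)) ∧
    ∀ i, i ≤ n + 2 → p i ∉ convexHull ℝ (p '' {j | j ≤ n + 2 ∧ j ≠ i})

/-- The line segment `γ(e.1, e.2)` of the polygon. -/
def Seg (p : ℕ → ℂ) (e : ℕ × ℕ) : Set ℂ := segment ℝ (p e.1) (p e.2)

/-- Two segments cross when they intersect in a point that is not a common endpoint. -/
def Cross (p : ℕ → ℂ) (e f : ℕ × ℕ) : Prop :=
  ∃ z, z ∈ Seg p e ∧ z ∈ Seg p f ∧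
    ¬((z = p e.1 ∨ z = p e.2) ∧ (z = p f.1 ∨ z = p f.2))

/-- Slope of the segment `γ(e.1, e.2)`. -/
def slope (p : ℕ → ℂ) (e : ℕ × ℕ) : ℝ :=
  ((p e.2).im - (p e.1).im) / ((p e.2).re - (p e.1).re)

def ValidPair (n : ℕ) (e : ℕ × ℕ) : Prop := e.1 < e.2 ∧ e.2 ≤ n + 2

/-- A triangulation of `P(Q)`: a maximal collection of pairwise noncrossing segments. -/
def IsTriangulation (n : ℕ) (p : ℕ → ℂ) (T : Finset (ℕ × ℕ)) : Prop :=
  (∀ e ∈ T, ValidPair n e) ∧ (∀ e ∈ T, ∀ f ∈ T, e ≠ f → ¬Cross p e f) ∧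
    ∀ e, ValidPair n e → e ∉ T → ∃ f ∈ T, Cross p e f

/-- Cross product of two planar vectors; positive iff `(u, v)` is counterclockwise. -/
def cross2 (u v : ℂ) : ℝ := u.re * v.im - u.im * v.re

/-- Arrows of the adjacency quiver `Q(T)` of a triangulation `T`: `e → f` whenever
`e` and `f` are sides of a common triangle of `T` and `f` follows `e` going
counterclockwise around that triangle. -/
def TriArrow (p : ℕ → ℂ) (T : Finset (ℕ × ℕ)) (e f : ℕ × ℕ) : Prop :=
  ∃ a b c : ℕ, a < b ∧ b < c ∧ (a, b) ∈ T ∧ (b, c) ∈ T ∧ (a, c) ∈ T ∧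
    ((0 < cross2 (p b - p a) (p c - p a) ∧
        ((e = (a, b) ∧ f = (b, c)) ∨ (e = (b, c) ∧ f = (a, c)) ∨
          (e = (a, c) ∧ f = (a, b)))) ∨
      (cross2 (p b - p a) (p c - p a) < 0 ∧
        ((e = (a, c) ∧ f = (b, c)) ∨ (e = (b, c) ∧ f = (a, b)) ∨
          (e = (a, b) ∧ f = (a, c)))))

/-! ### Representations of `Q` -/

/-- A finite dimensional representation of the quiver `Q` of type `A_{n+2}` over `k`.
The vector spaces are indexed by `ℕ`, and are required to vanish outside the set
`{1, …, n+2}` of vertices of `Q`.  For each `i`, `fwd i : V i → V (i+1)` is the structure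
map of the arrow `i → i+1` (it is required to vanish when the arrow is oriented in the
other direction, i.e. `ε i = false`) and `bwd i : V (i+1) → V i` is the structure map of
the arrow `i+1 → i` (required to vanish when `ε i = true`). -/
structure ARep (k : Type) [Field k] (n : ℕ) (ε : ℕ → Bool) where
  V : ℕ → Type
  [acg : ∀ x, AddCommGroup (V x)]
  [mod : ∀ x, Module k (V x)]
  [fdim : ∀ x, FiniteDimensional k (V x)]
  triv : ∀ x, x = 0 ∨ n + 2 < x → ∀ v : V x, v = 0
  fwd : ∀ i, V i →ₗ[k] V (i + 1)
  bwd : ∀ i, V (i + 1) →ₗ[k] V i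
  fwd_zero : ∀ i, ε i = false → fwd i = 0
  bwd_zero : ∀ i, ε i = true → bwd i = 0

attribute [instance] ARep.acg ARep.mod ARep.fdim

variable {k : Type} [Field k] {n : ℕ} {ε : ℕ → Bool}

/-- Morphisms of representations. -/
@[ext]
structure ARep.Hom (M N : ARep k n ε) where
  app : ∀ x, M.V x →ₗ[k] N.V x
  comm_fwd : ∀ i (v : M.V i), app (i + 1) (M.fwd i v) = N.fwd i (app i v)
  comm_bwd : ∀ i (v : M.V (i + 1)), app i (M.bwd i v) = N.bwd i (app (i + 1) v)

/-- The identity morphism. -/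
def ARep.Hom.id (M : ARep k n ε) : M.Hom M :=
  ⟨fun _ => LinearMap.id, fun _ _ => rfl, fun _ _ => rfl⟩

/-- Composition of morphisms. -/
def ARep.Hom.comp {M N P : ARep k n ε} (g : N.Hom P) (f : M.Hom N) : M.Hom P where
  app x := (g.app x).comp (f.app x)
  comm_fwd i v := by simp only [LinearMap.comp_apply, f.comm_fwd, g.comm_fwd]
  comm_bwd i v := by simp only [LinearMap.comp_apply, f.comm_bwd, g.comm_bwd]

/-- Sum of two morphisms. -/
def ARep.Hom.add {M N : ARep k n ε} (f g : M.Hom N) : M.Hom N where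
  app x := f.app x + g.app x
  comm_fwd i v := by
    simp only [LinearMap.add_apply, f.comm_fwd, g.comm_fwd, map_add]
  comm_bwd i v := by
    simp only [LinearMap.add_apply, f.comm_bwd, g.comm_bwd, map_add]

/-- Scalar multiple of a morphism. -/
def ARep.Hom.smul {M N : ARep k n ε} (c : k) (f : M.Hom N) : M.Hom N where
  app x := c • f.app x
  comm_fwd i v := by simp only [LinearMap.smul_apply, f.comm_fwd, map_smul]
  comm_bwd i v := by simp only [LinearMap.smul_apply, f.comm_bwd, map_smul]

/-- Isomorphism of representations. -/
def ARep.Iso (M N : ARep k n ε) : Prop :=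
  ∃ f : M.Hom N, ∀ x, Function.Bijective (f.app x)

/-- The zero representation(s). -/
def ARep.IsZero (M : ARep k n ε) : Prop := ∀ x, ∀ v : M.V x, v = 0

/-- The support of a representation. -/
def ARep.supp (M : ARep k n ε) : Set ℕ := {x | ∃ v : M.V x, v ≠ 0}

/-- Direct sum of two representations. -/
def ARep.dsum (M N : ARep k n ε) : ARep k n ε where
  V x := M.V x × N.V x
  acg _ := by infer_instance
  mod _ := by infer_instance
  fdim _ := by infer_instance
  triv x hx v := by
    have h1 := M.triv x hx v.1
    have h2 := N.triv x hx v.2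
    exact Prod.ext h1 h2
  fwd i := (M.fwd i).prodMap (N.fwd i)
  bwd i := (M.bwd i).prodMap (N.bwd i)
  fwd_zero i h := by
    show (M.fwd i).prodMap (N.fwd i) = 0
    rw [M.fwd_zero i h, N.fwd_zero i h]
    apply LinearMap.ext; rintro ⟨a, b⟩; simp
  bwd_zero i h := by
    show (M.bwd i).prodMap (N.bwd i) = 0
    rw [M.bwd_zero i h, N.bwd_zero i h]
    apply LinearMap.ext; rintro ⟨a, b⟩; simp

/-- One dimensional space `k` if `P` holds, `0` otherwise (as a submodule of `k`). -/
def fiber (k : Type) [Field k] (P : Prop) : Submodule k k := if P then ⊤ else ⊥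

/-- The canonical map `fiber k P → fiber k Q` : "identity" if `P ∧ Q`, zero otherwise. -/
def fiberMap (k : Type) [Field k] (P Q : Prop) : fiber k P →ₗ[k] fiber k Q :=
  if h : P ∧ Q then
    { toFun := fun v => ⟨(v : k), by rw [fiber, if_pos h.2]; exact Submodule.mem_top⟩
      map_add' := fun _ _ => rfl
      map_smul' := fun _ _ => rfl }
  else 0

/-- The zero representation. -/
def zeroRep (k : Type) [Field k] (n : ℕ) (ε : ℕ → Bool) : ARep k n ε where
  V _ := ↥(fiber k False)
  acg _ := by infer_instance
  mod _ := by infer_instance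
  fdim _ := by infer_instance
  triv x _ v := by
    have hfib : fiber k False = ⊥ := if_neg (fun h : False => h.elim)
    obtain ⟨w, hw⟩ := v
    apply Subtype.ext
    have hb : w ∈ (⊥ : Submodule k k) := hfib ▸ hw
    exact (Submodule.mem_bot k).1 hb
  fwd _ := 0
  bwd _ := 0
  fwd_zero _ _ := rfl
  bwd_zero _ _ := rfl

/-- The condition for a vertex `x` to be in the support of the interval representation
`M(i,j)`. -/
def SuppCond (n i j x : ℕ) : Prop := i ≤ x ∧ x ≤ j ∧ 1 ≤ x ∧ x ≤ n + 2

/-- The interval (string) representation `M(i,j)` of `Q`: one dimensional at each vertex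
`x` with `i ≤ x ≤ j`, zero elsewhere, with identity maps on all arrows whose endpoints
both lie in `[i,j]`. -/
def intervalRep (k : Type) [Field k] (n : ℕ) (ε : ℕ → Bool) (i j : ℕ) : ARep k n ε where
  V x := ↥(fiber k (SuppCond n i j x))
  acg _ := by infer_instance
  mod _ := by infer_instance
  fdim _ := by infer_instance
  triv x hx v := by
    have hP : ¬SuppCond n i j x := by simp only [SuppCond]; omega
    have hfib : fiber k (SuppCond n i j x) = ⊥ := if_neg hP
    obtain ⟨w, hw⟩ := v
    apply Subtype.ext
    have hb : w ∈ (⊥ : Submodule k k) := hfib ▸ hw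
    exact (Submodule.mem_bot k).1 hb
  fwd ℓ :=
    if ε ℓ = true then fiberMap k (SuppCond n i j ℓ) (SuppCond n i j (ℓ + 1)) else 0
  bwd ℓ :=
    if ε ℓ = true then 0 else fiberMap k (SuppCond n i j (ℓ + 1)) (SuppCond n i j ℓ)
  fwd_zero ℓ h := by simp [h]
  bwd_zero ℓ h := by simp [h]

/-- Direct sum of a list of representations. -/
def dsumList (k : Type) [Field k] (n : ℕ) (ε : ℕ → Bool) :
    List (ARep k n ε) → ARep k n ε
  | [] => zeroRep k n ε
  | M :: L => M.dsum (dsumList k n ε L)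

/-- Indecomposable representations. -/
def ARep.Indec (M : ARep k n ε) : Prop :=
  ¬M.IsZero ∧ ∀ A B : ARep k n ε, M.Iso (A.dsum B) → A.IsZero ∨ B.IsZero

/-- `A` is a direct summand of `T`. -/
def ARep.IsSummand (A T : ARep k n ε) : Prop := ∃ B : ARep k n ε, T.Iso (A.dsum B)

/-- A representation is basic when it has no repeated indecomposable direct summand. -/
def ARep.Basic (T : ARep k n ε) : Prop :=
  ∀ A : ARep k n ε, A.Indec → ¬(A.dsum A).IsSummand T

/-- A short exact sequence `0 → B → E → A → 0`. -/
structure SES (B A : ARep k n ε) where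
  E : ARep k n ε
  ι : B.Hom E
  π : E.Hom A
  inj : ∀ x, Function.Injective (ι.app x)
  surj : ∀ x, Function.Surjective (π.app x)
  exct : ∀ x (v : E.V x), π.app x v = 0 ↔ ∃ u, ι.app x u = v

/-- A short exact sequence splits. -/
def SES.Splits {B A : ARep k n ε} (σ : SES B A) : Prop :=
  ∃ r : σ.E.Hom B, ∀ x (v : B.V x), r.app x (σ.ι.app x v) = v

/-- `Ext¹(A, B) = 0` : every short exact sequence `0 → B → E → A → 0` splits. -/
def ExtZero (A B : ARep k n ε) : Prop := ∀ σ : SES B A, σ.Splits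

/-- `Ext¹(A,B) ≅ k`, generated by (the class of) a short exact sequence
`0 → B → E → A → 0` with indecomposable middle term `E`: there is a non-split such
sequence `σ` with `σ.E` indecomposable such that every non-split sequence is equivalent
to a nonzero scalar multiple of `σ`. -/
def ExtOneDimIndecMid (A B : ARep k n ε) : Prop :=
  ∃ σ : SES B A, ¬σ.Splits ∧ σ.E.Indec ∧
    ∀ τ : SES B A, ¬τ.Splits → ∃ c : k, c ≠ 0 ∧
      ∃ φ : σ.E.Hom τ.E, (∀ x, Function.Bijective (φ.app x)) ∧
        (∀ x (v : B.V x), φ.app x (σ.ι.app x v) = τ.ι.app x v) ∧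
        (∀ x (v : σ.E.V x), τ.π.app x (φ.app x v) = c • σ.π.app x v)

/-- Almost rigid representations. -/
def AlmostRigid (T : ARep k n ε) : Prop :=
  T.Basic ∧ ∀ A B : ARep k n ε, A.Indec → B.Indec → A.IsSummand T → B.IsSummand T →
    ExtZero A B ∨ ExtOneDimIndecMid A B

/-- Maximal almost rigid representations. -/
def MaxAlmostRigid (T : ARep k n ε) : Prop :=
  AlmostRigid T ∧ ∀ M : ARep k n ε, ¬M.IsZero → ¬AlmostRigid (T.dsum M)

/-- `f` is a section. -/
def ARep.Hom.IsSection {M N : ARep k n ε} (f : M.Hom N) : Prop :=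
  ∃ g : N.Hom M, ∀ x (v : M.V x), g.app x (f.app x v) = v

/-- `f` is a retraction. -/
def ARep.Hom.IsRetraction {M N : ARep k n ε} (f : M.Hom N) : Prop :=
  ∃ g : N.Hom M, ∀ x (v : N.V x), f.app x (g.app x v) = v

/-- Irreducible morphisms: `f` is neither a section nor a retraction, and in every
factorization `f = g ∘ h` either `h` is a section or `g` is a retraction. -/
def ARep.Hom.Irred {M N : ARep k n ε} (f : M.Hom N) : Prop :=
  ¬f.IsSection ∧ ¬f.IsRetraction ∧
    ∀ (Z : ARep k n ε) (h : M.Hom Z) (g : Z.Hom N),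
      (∀ x (v : M.V x), f.app x v = g.app x (h.app x v)) → h.IsSection ∨ g.IsRetraction

/-- Subrepresentations : families of subspaces closed under the structure maps. -/
structure Subrep (M : ARep k n ε) where
  U : ∀ x, Submodule k (M.V x)
  fwd_mem : ∀ i, ∀ v ∈ U i, M.fwd i v ∈ U (i + 1)
  bwd_mem : ∀ i, ∀ v ∈ U (i + 1), M.bwd i v ∈ U i

/-- The central charge `Z(M) = Σ_{x=1}^{n+2} dim_k(M_x) · (p_x − p_{x−1})`. -/
def charge (p : ℕ → ℂ) (M : ARep k n ε) : ℂ :=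
  ∑ x ∈ Finset.Icc 1 (n + 2), (Module.finrank k (M.V x) : ℂ) * (p x - p (x - 1))

/-- The central charge of a subrepresentation. -/
def subCharge (p : ℕ → ℂ) {M : ARep k n ε} (L : Subrep M) : ℂ :=
  ∑ x ∈ Finset.Icc 1 (n + 2), (Module.finrank k (L.U x) : ℂ) * (p x - p (x - 1))

/-- The representation `F(T) = ⊕_{γ(a,b) ∈ T} M(a+1, b)` attached to a collection `T` of
segments of the polygon `P(Q)`. -/
def FRep (k : Type) [Field k] (n : ℕ) (ε : ℕ → Bool) (T : Finset (ℕ × ℕ)) : ARep k n ε :=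
  dsumList k n ε (T.toList.map fun e => intervalRep k n ε (e.1 + 1) e.2)

end CambrianA

namespace CambrianA

/-! Write `e = γ(a, b)` and `f = γ(c, d)`. Going from left to right, `e` crosses `f` upwards
exactly when they overlap, `e` lies below `f` where both begin to coexist and above `f` where both
cease to coexist. In convex position the position of a vertex relative to a chord is dictated by
its bar, so this is a condition on `a, b, c, d` and the orientation of `Q`. The same condition, with
weak inequalities in the overlap, says that the canonical maps between interval representations
form a nonsplit sequence `0 → M(f) → M(a+1, d) ⊕ M(c+1, b) → M(e) → 0`. When `e` and `f` really
cross, both summands of the middle term are nonzero; when one segment ends where the other begins,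
one summand vanishes and the cochain space is a line, so the sequence generates `Ext¹`. Otherwise
every cochain is a coboundary: `Q` is a tree, so the coefficients of a cochain are differences of a
potential, which only has to be normalized at the one vertex where the two supports part. -/

section Representations

variable {k : Type} [Field k] {n : ℕ} {ε : ℕ → Bool}

/-- The arrows of `Q`, indexed by source and target, so that both orientations are treated at
once. There is one arrow between `ℓ` and `ℓ + 1` for every natural number `ℓ`; those outside
`1, …, n + 2` do no harm, as representations vanish there. -/
inductive Arrow (ε : ℕ → Bool) : ℕ → ℕ → Type
  | fwd (ℓ : ℕ) (h : ε ℓ = true) : Arrow ε ℓ (ℓ + 1)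
  | bwd (ℓ : ℕ) (h : ε ℓ = false) : Arrow ε (ℓ + 1) ℓ

instance (x y : ℕ) : Subsingleton (Arrow ε x y) where
  allEq α β := by
    cases α <;> cases β <;> rfl

theorem injective_fst_of_section {L M N : Type*} [AddCommGroup L] [Module k L] [AddCommGroup M]
    [Module k M] [AddCommGroup N] [Module k N] (s : L →ₗ[k] M × N) (r : M × N →ₗ[k] L)
    (hrs : ∀ v, r (s v) = v) (h : ∀ w, (s (r (0, w))).2 = 0) :
    Function.Injective fun v => (s v).1 := by
  refine (injective_iff_map_eq_zero (LinearMap.fst k M N ∘ₗ s)).2 fun v (hv : (s v).1 = 0) => ?_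
  have hsv : s v = (0, (s v).2) := Prod.ext hv rfl
  have hv0 : (s v).2 = 0 := by rw [← h (s v).2, ← hsv, hrs]
  rw [← hrs v, hsv, hv0]
  exact map_zero r

/-- A subrepresentation, as a representation. -/
def Subrep.toRep {M : ARep k n ε} (L : Subrep M) : ARep k n ε where
  V x := L.U x
  triv x hx v := Subtype.ext (M.triv x hx v)
  fwd i := (M.fwd i).restrict (L.fwd_mem i)
  bwd i := (M.bwd i).restrict (L.bwd_mem i)
  fwd_zero i h := LinearMap.ext fun v => Subtype.ext (LinearMap.congr_fun (M.fwd_zero i h) v)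
  bwd_zero i h := LinearMap.ext fun v => Subtype.ext (LinearMap.congr_fun (M.bwd_zero i h) v)

/-- The inclusion of a subrepresentation. -/
def Subrep.subtype {M : ARep k n ε} (L : Subrep M) : L.toRep.Hom M where
  app x := (L.U x).subtype
  comm_fwd _ _ := rfl
  comm_bwd _ _ := rfl

namespace ARep

/-- The structure map of a representation at an arrow. -/
def map (M : ARep k n ε) {x y : ℕ} : Arrow ε x y → M.V x →ₗ[k] M.V y
  | .fwd ℓ _ => M.fwd ℓ
  | .bwd ℓ _ => M.bwd ℓ

namespace Hom

variable {L M N : ARep k n ε}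

theorem naturality (f : M.Hom N) {x y : ℕ} (α : Arrow ε x y) (v : M.V x) :
    f.app y (M.map α v) = N.map α (f.app x v) := by
  cases α with
  | fwd => exact f.comm_fwd _ v
  | bwd => exact f.comm_bwd _ v

/-- The morphism with given components, natural at every arrow. -/
def ofArrows (f : ∀ x, M.V x →ₗ[k] N.V x)
    (hf : ∀ {x y : ℕ} (α : Arrow ε x y) (v : M.V x), f y (M.map α v) = N.map α (f x v)) :
    M.Hom N where
  app := f
  comm_fwd ℓ v := by
    cases h : ε ℓ with
    | true => exact hf (.fwd ℓ h) v
    | false => simp [M.fwd_zero ℓ h, N.fwd_zero ℓ h]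
  comm_bwd ℓ v := by
    cases h : ε ℓ with
    | true => simp [M.bwd_zero ℓ h, N.bwd_zero ℓ h]
    | false => exact hf (.bwd ℓ h) v

@[simp] theorem comp_app (g : M.Hom N) (f : L.Hom M) (x : ℕ) (v : L.V x) :
    (g.comp f).app x v = g.app x (f.app x v) := rfl

@[simp] theorem smul_app (c : k) (f : M.Hom N) (x : ℕ) (v : M.V x) :
    (smul c f).app x v = c • f.app x v := rfl

end Hom

section DirectSum

variable (M N : ARep k n ε)

/-- The inclusion of the first summand. -/
def inl : M.Hom (M.dsum N) where
  app x := LinearMap.inl k (M.V x) (N.V x)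
  comm_fwd i _ := Prod.ext rfl (map_zero (N.fwd i)).symm
  comm_bwd i _ := Prod.ext rfl (map_zero (N.bwd i)).symm

/-- The inclusion of the second summand. -/
def inr : N.Hom (M.dsum N) where
  app x := LinearMap.inr k (M.V x) (N.V x)
  comm_fwd i _ := Prod.ext (map_zero (M.fwd i)).symm rfl
  comm_bwd i _ := Prod.ext (map_zero (M.bwd i)).symm rfl

/-- The projection to the first summand. -/
def fst : (M.dsum N).Hom M where
  app x := LinearMap.fst k (M.V x) (N.V x)
  comm_fwd _ _ := rfl
  comm_bwd _ _ := rfl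

/-- The projection to the second summand. -/
def snd : (M.dsum N).Hom N where
  app x := LinearMap.snd k (M.V x) (N.V x)
  comm_fwd _ _ := rfl
  comm_bwd _ _ := rfl

variable {M N} (x : ℕ)

@[simp] theorem fst_app (v : (M.dsum N).V x) : (M.fst N).app x v = v.1 := rfl

theorem inl_add_inr (v : (M.dsum N).V x) :
    (M.inl N).app x v.1 + (M.inr N).app x v.2 = v :=
  Prod.ext (add_zero v.1) (zero_add v.2)

theorem finrank_dsum :
    Module.finrank k ((M.dsum N).V x) = Module.finrank k (M.V x) + Module.finrank k (N.V x) :=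
  Module.finrank_prod

variable {L : ARep k n ε}

/-- The morphism into a direct sum with given components. -/
def pair (f : L.Hom M) (g : L.Hom N) : L.Hom (M.dsum N) where
  app x := (f.app x).prod (g.app x)
  comm_fwd i v := Prod.ext (f.comm_fwd i v) (g.comm_fwd i v)
  comm_bwd i v := Prod.ext (f.comm_bwd i v) (g.comm_bwd i v)

/-- The morphism out of a direct sum with given components. -/
def copair (f : M.Hom L) (g : N.Hom L) : (M.dsum N).Hom L :=
  (f.comp (M.fst N)).add (g.comp (M.snd N))

end DirectSum

section Isomorphism

variable {L M N : ARep k n ε}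

theorem Iso.of_inverse (f : M.Hom N) (g : N.Hom M) (hgf : ∀ x v, g.app x (f.app x v) = v)
    (hfg : ∀ x v, f.app x (g.app x v) = v) : M.Iso N :=
  ⟨f, fun x => Function.bijective_iff_has_inverse.2 ⟨g.app x, hgf x, hfg x⟩⟩

theorem Hom.exists_inverse (f : M.Hom N) (hf : ∀ x, Function.Bijective (f.app x)) :
    ∃ g : N.Hom M, (∀ x v, g.app x (f.app x v) = v) ∧ ∀ x v, f.app x (g.app x v) = v := by
  let e x := LinearEquiv.ofBijective (f.app x) (hf x)
  have he x v : f.app x ((e x).symm v) = v := (e x).apply_symm_apply v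
  refine ⟨.ofArrows (fun x => (e x).symm) fun {x y} α v => (hf y).1 ?_,
    fun x => (e x).symm_apply_apply, he⟩
  simp only [LinearEquiv.coe_coe, he, f.naturality]

theorem Iso.symm (h : M.Iso N) : N.Iso M := by
  obtain ⟨f, hf⟩ := h
  obtain ⟨g, hgf, hfg⟩ := f.exists_inverse hf
  exact .of_inverse g f hfg hgf

theorem Iso.trans (hLM : L.Iso M) (hMN : M.Iso N) : L.Iso N := by
  obtain ⟨f, hf⟩ := hLM
  obtain ⟨g, hg⟩ := hMN
  exact ⟨g.comp f, fun x => (hg x).comp (hf x)⟩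

theorem dsum_comm_iso (M N : ARep k n ε) : (M.dsum N).Iso (N.dsum M) :=
  .of_inverse (pair (M.snd N) (M.fst N)) (pair (N.snd M) (N.fst M))
    (fun _ _ => rfl) (fun _ _ => rfl)

theorem dsum_iso_left (h : N.IsZero) : (M.dsum N).Iso M :=
  .of_inverse (M.fst N) (M.inl N) (fun x v => Prod.ext rfl (h x v.2).symm) (fun _ _ => rfl)

theorem dsum_iso_right (h : M.IsZero) : (M.dsum N).Iso N :=
  (dsum_comm_iso M N).trans (dsum_iso_left h)

theorem Iso.isZero (h : M.Iso N) (hN : N.IsZero) : M.IsZero := by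
  obtain ⟨f, hf⟩ := h
  exact fun x v => (hf x).1 ((hN x _).trans (hN x _).symm)

theorem Iso.supp_eq (h : M.Iso N) : M.supp = N.supp := by
  obtain ⟨f, hf⟩ := h
  ext x
  constructor
  · rintro ⟨v, hv⟩
    exact ⟨f.app x v, (map_ne_zero_iff (f.app x) (hf x).1).2 hv⟩
  · rintro ⟨w, hw⟩
    obtain ⟨v, rfl⟩ := (hf x).2 w
    exact ⟨v, (map_ne_zero_iff (f.app x) (hf x).1).1 hw⟩

theorem Iso.finrank_eq (h : M.Iso N) (x : ℕ) :
    Module.finrank k (M.V x) = Module.finrank k (N.V x) := by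
  obtain ⟨f, hf⟩ := h
  exact (LinearEquiv.ofBijective (f.app x) (hf x)).finrank_eq

theorem isSummand_dsum_left (M N : ARep k n ε) : M.IsSummand (M.dsum N) :=
  ⟨N, .of_inverse (.id _) (.id _) (fun _ _ => rfl) (fun _ _ => rfl)⟩

theorem isSummand_dsum_right (M N : ARep k n ε) : N.IsSummand (M.dsum N) :=
  ⟨M, dsum_comm_iso M N⟩

theorem IsSummand.exists_isSection (h : M.IsSummand N) : ∃ s : M.Hom N, s.IsSection := by
  obtain ⟨B, f, hf⟩ := h
  obtain ⟨g, -, hfg⟩ := f.exists_inverse hf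
  exact ⟨g.comp (M.inl B), (M.fst B).comp f, fun x v => congrArg Prod.fst (hfg x (v, 0))⟩

end Isomorphism

section Kernel

variable {M N : ARep k n ε}

/-- The kernel of a morphism. -/
def Hom.ker (f : M.Hom N) : Subrep M where
  U x := LinearMap.ker (f.app x)
  fwd_mem i v hv := by rw [LinearMap.mem_ker, f.comm_fwd, LinearMap.mem_ker.1 hv, map_zero]
  bwd_mem i v hv := by rw [LinearMap.mem_ker, f.comm_bwd, LinearMap.mem_ker.1 hv, map_zero]

theorem Hom.IsRetraction.iso_dsum_ker {f : M.Hom N} (hf : f.IsRetraction) :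
    M.Iso (N.dsum f.ker.toRep) := by
  obtain ⟨s, hfs⟩ := hf
  refine Iso.symm ⟨copair s f.ker.subtype, fun x => ⟨?_, fun v => ?_⟩⟩
  · refine (injective_iff_map_eq_zero _).2 fun ⟨v, w, hw⟩ h => ?_
    replace h : s.app x v + w = 0 := h
    have hv : v = 0 := by simpa [hfs, LinearMap.mem_ker.1 hw] using congrArg (f.app x) h
    subst hv
    exact Prod.ext rfl (Subtype.ext (by rwa [map_zero, zero_add] at h))
  · have hv : v - s.app x (f.app x v) ∈ f.ker.U x :=
      LinearMap.mem_ker.2 (by rw [map_sub, hfs, sub_self])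
    exact ⟨(f.app x v, ⟨_, hv⟩), add_sub_cancel (s.app x (f.app x v)) v⟩

theorem Indec.iso_of_isRetraction (hM : M.Indec) (hN : ¬N.IsZero) {f : M.Hom N}
    (hf : f.IsRetraction) : M.Iso N :=
  hf.iso_dsum_ker.trans (dsum_iso_left ((hM.2 _ _ hf.iso_dsum_ker).resolve_left hN))

end Kernel

section ScalarEnd

variable {A M N : ARep k n ε}

/-- Every endomorphism of `M` is multiplication by a scalar. Such a representation is zero or
indecomposable, and direct sums of two of them satisfy the Krull–Schmidt property. -/
def ScalarEnd (M : ARep k n ε) : Prop :=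
  ∀ f : M.Hom M, ∃ c : k, ∀ x v, f.app x v = c • v

theorem ScalarEnd.of_iso (hM : M.ScalarEnd) (h : N.Iso M) : N.ScalarEnd := by
  intro e
  obtain ⟨f, hf⟩ := h
  obtain ⟨g, hgf, -⟩ := f.exists_inverse hf
  obtain ⟨c, hc⟩ := hM ((f.comp e).comp g)
  refine ⟨c, fun x v => (hf x).1 ?_⟩
  simpa [hgf] using hc x (f.app x v)

theorem ScalarEnd.indec (hM : M.ScalarEnd) (hM0 : ¬M.IsZero) : M.Indec := by
  refine ⟨hM0, fun A B ⟨f, hf⟩ => ?_⟩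
  obtain ⟨g, -, hfg⟩ := f.exists_inverse hf
  obtain ⟨c, hc⟩ := hM (((g.comp (A.inl B)).comp (A.fst B)).comp f)
  have hproj (x : ℕ) (v : (A.dsum B).V x) : (A.inl B).app x v.1 = c • v := by
    have h := congrArg (f.app x) (hc x (g.app x v))
    simpa only [Hom.comp_app, fst_app, map_smul, hfg] using h
  by_cases hc0 : c = 0
  · refine .inl fun x a => ?_
    have hca : a = c • a := congrArg Prod.fst (hproj x (a, 0))
    simpa [hc0] using hca
  · refine .inr fun x b => ?_
    have hcb : 0 = c • b := congrArg Prod.snd (hproj x (0, b))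
    simpa [hc0] using hcb.symm

theorem Indec.comp_eq_zero (hA : A.Indec) (hM : M.ScalarEnd) (hAM : ¬A.Iso M) (f : A.Hom M)
    (g : M.Hom A) (x : ℕ) (v : M.V x) : f.app x (g.app x v) = 0 := by
  obtain ⟨c, hc⟩ := hM (f.comp g)
  suffices c = 0 ∨ M.IsZero by
    rcases this with rfl | hM0
    · simpa using hc x v
    · exact hM0 x _
  by_contra! ⟨hc0, hM0⟩
  exact hAM (hA.iso_of_isRetraction hM0
    ⟨.smul c⁻¹ g, fun x v => by simpa [hc0] using congrArg (c⁻¹ • ·) (hc x v)⟩)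

theorem Indec.iso_or_iso_of_isSection (hA : A.Indec) (hM : M.ScalarEnd) (hN : N.ScalarEnd)
    {s : A.Hom (M.dsum N)} (hs : s.IsSection) : A.Iso M ∨ A.Iso N := by
  obtain ⟨r, hrs⟩ := hs
  by_contra! ⟨hAM, hAN⟩
  have hM x m : (s.app x (r.app x ((M.inl N).app x m))).1 = 0 :=
    hA.comp_eq_zero hM hAM ((M.fst N).comp s) (r.comp (M.inl N)) x m
  have hN x n : (s.app x (r.app x ((M.inr N).app x n))).2 = 0 :=
    hA.comp_eq_zero hN hAN ((M.snd N).comp s) (r.comp (M.inr N)) x n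
  have hinj x := injective_fst_of_section (s.app x) (r.app x) (hrs x) (hN x)
  have hinl x m : r.app x ((M.inl N).app x m) = 0 :=
    hinj x ((hM x m).trans (congrArg Prod.fst (map_zero (s.app x))).symm)
  refine hA.1 fun x v => ?_
  have hv : v = r.app x ((M.inr N).app x (s.app x v).2) := by
    conv_lhs => rw [← hrs x v, ← inl_add_inr x (s.app x v), map_add, hinl, zero_add]
  have hv0 : (s.app x v).2 = 0 := (congrArg (fun u => (s.app x u).2) hv).trans (hN x _)
  rw [hv, hv0, map_zero, map_zero]

theorem Indec.not_isSection_dsum_self (hA : A.Indec) (hM : M.ScalarEnd) (hN : N.ScalarEnd)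
    (hAN : ¬A.Iso N) (s : (A.dsum A).Hom (M.dsum N)) : ¬s.IsSection := by
  rintro ⟨r, hrs⟩
  have hAM : A.Iso M :=
    (hA.iso_or_iso_of_isSection hM hN (s := s.comp (A.inl A)) ⟨(A.fst A).comp r,
      fun x v => congrArg Prod.fst (hrs x (v, 0))⟩).resolve_right hAN
  have hN x n : (s.app x (r.app x ((M.inr N).app x n))).2 = 0 := by
    have h₁ := hA.comp_eq_zero hN hAN (((M.snd N).comp s).comp (A.inl A))
      ((A.fst A).comp (r.comp (M.inr N))) x n
    have h₂ := hA.comp_eq_zero hN hAN (((M.snd N).comp s).comp (A.inr A))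
      ((A.snd A).comp (r.comp (M.inr N))) x n
    rw [← inl_add_inr x (r.app x ((M.inr N).app x n)), map_add]
    exact (congrArg₂ (· + ·) h₁ h₂).trans (add_zero 0)
  refine hA.1 fun x v => ?_
  have hle : Module.finrank k ((A.dsum A).V x) ≤ Module.finrank k (M.V x) :=
    LinearMap.finrank_le_finrank_of_injective (f := ((M.fst N).comp s).app x)
      (injective_fst_of_section (s.app x) (r.app x) (hrs x) (hN x))
  rw [finrank_dsum, ← hAM.finrank_eq] at hle
  have := Module.finrank_zero_iff.1 (show Module.finrank k (A.V x) = 0 by lia)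
  exact Subsingleton.elim v 0

theorem ScalarEnd.basic_dsum (hM : M.ScalarEnd) (hN : N.ScalarEnd) (hMN : ¬M.Iso N) :
    (M.dsum N).Basic := by
  intro A hA hsummand
  obtain ⟨s, hs⟩ := hsummand.exists_isSection
  by_cases hAN : A.Iso N
  · have hAM : ¬A.Iso M := fun hAM => hMN (hAM.symm.trans hAN)
    obtain ⟨r, hrs⟩ := hs
    exact hA.not_isSection_dsum_self hN hM hAM ((pair (M.snd N) (M.fst N)).comp s)
      ⟨r.comp (pair (N.snd M) (N.fst M)), hrs⟩
  · exact hA.not_isSection_dsum_self hM hN hAN s hs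

end ScalarEnd

end ARep

end Representations


section Extensions

variable {k : Type} [Field k] {n : ℕ} {ε : ℕ → Bool} {A A' B B' M N X Y : ARep k n ε}

/-- The condition on a pair of indecomposable summands in the definition of almost rigidity. -/
def AlmostRigidPair (A B : ARep k n ε) : Prop := ExtZero A B ∨ ExtOneDimIndecMid A B

namespace SES

/-- The sequence `τ` is equivalent to a nonzero scalar multiple of `σ`. -/
def ScalarEquiv (σ τ : SES B A) : Prop :=
  ∃ c : k, c ≠ 0 ∧
    ∃ φ : σ.E.Hom τ.E, (∀ x, Function.Bijective (φ.app x)) ∧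
      (∀ x (v : B.V x), φ.app x (σ.ι.app x v) = τ.ι.app x v) ∧
      (∀ x (v : σ.E.V x), τ.π.app x (φ.app x v) = c • σ.π.app x v)

/-- The sequence with the same middle term, obtained by identifying the end terms with
isomorphic representations. -/
def transport (σ : SES B A) (g : B'.Hom B) (hg : ∀ x, Function.Bijective (g.app x))
    (f : A.Hom A') (hf : ∀ x, Function.Bijective (f.app x)) : SES B' A' where
  E := σ.E
  ι := σ.ι.comp g
  π := f.comp σ.π
  inj x := (σ.inj x).comp (hg x).1
  surj x := (hf x).2.comp (σ.surj x)
  exct x v := by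
    rw [ARep.Hom.comp_app, map_eq_zero_iff _ (hf x).1, σ.exct]
    exact (hg x).2.exists

theorem Splits.of_transport {σ : SES B A} {g : B'.Hom B}
    {hg : ∀ x, Function.Bijective (g.app x)} {f : A.Hom A'}
    {hf : ∀ x, Function.Bijective (f.app x)} (h : (σ.transport g hg f hf).Splits) :
    σ.Splits := by
  obtain ⟨r, hr⟩ := h
  refine ⟨g.comp r, fun x v => ?_⟩
  obtain ⟨u, rfl⟩ := (hg x).2 v
  exact congrArg (g.app x) (hr x u)

/-- A sequence with injective first map, surjective second map and zero composite is exact as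
soon as the dimensions add up. -/
def ofFinrank (E : ARep k n ε) (ι : B.Hom E) (π : E.Hom A)
    (inj : ∀ x, Function.Injective (ι.app x)) (surj : ∀ x, Function.Surjective (π.app x))
    (comp_eq_zero : ∀ x v, π.app x (ι.app x v) = 0)
    (finrank_eq : ∀ x, Module.finrank k (E.V x) =
      Module.finrank k (B.V x) + Module.finrank k (A.V x)) : SES B A where
  E := E
  ι := ι
  π := π
  inj := inj
  surj := surj
  exct x v := by
    have hle : LinearMap.range (ι.app x) ≤ LinearMap.ker (π.app x) := by
      rintro _ ⟨u, rfl⟩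
      exact comp_eq_zero x u
    have hrank : Module.finrank k (LinearMap.range (ι.app x)) =
        Module.finrank k (LinearMap.ker (π.app x)) := by
      have hker := (π.app x).finrank_range_add_finrank_ker
      rw [LinearMap.range_eq_top.2 (surj x), finrank_top, finrank_eq] at hker
      rw [LinearMap.finrank_range_of_inj (inj x)]
      lia
    rw [← LinearMap.mem_ker, ← Submodule.eq_of_le_of_finrank_eq hle hrank, LinearMap.mem_range]

/-- The sequence `0 → B → X ⊕ Y → A → 0` of a commutative square that is both cartesian and
cocartesian. -/
def ofSquare (a₁ : B.Hom X) (a₂ : B.Hom Y) (b₁ : X.Hom A) (b₂ : Y.Hom A)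
    (inj : ∀ x v, a₁.app x v = 0 → a₂.app x v = 0 → v = 0)
    (surj : ∀ x w, ∃ u v, b₁.app x u + b₂.app x v = w)
    (comm : ∀ x v, b₁.app x (a₁.app x v) = b₂.app x (a₂.app x v))
    (finrank_eq : ∀ x, Module.finrank k (X.V x) + Module.finrank k (Y.V x) =
      Module.finrank k (B.V x) + Module.finrank k (A.V x)) : SES B A :=
  ofFinrank (X.dsum Y) (ARep.pair a₁ a₂) (ARep.copair b₁ (.smul (-1) b₂))
    (fun x => (injective_iff_map_eq_zero _).2 fun v hv =>
      inj x v (congrArg Prod.fst hv) (congrArg Prod.snd hv))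
    (fun x w => by
      obtain ⟨u, v, rfl⟩ := surj x w
      refine ⟨(u, -v), ?_⟩
      change b₁.app x u + (-1 : k) • b₂.app x (-v) = b₁.app x u + b₂.app x v
      simp)
    (fun x v => by
      change b₁.app x (a₁.app x v) + (-1 : k) • b₂.app x (a₂.app x v) = 0
      simp [comm])
    (fun x => (ARep.finrank_dsum x).trans (finrank_eq x))

section Defect

/-- Families of linear maps along the arrows. Modulo coboundaries they compute `Ext¹(A, B)`. -/
abbrev Cochain (A B : ARep k n ε) : Type := ∀ ⦃x y : ℕ⦄, Arrow ε x y → (A.V x →ₗ[k] B.V y)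

variable {σ τ : SES B A} {s : ∀ x, A.V x →ₗ[k] σ.E.V x} {s' : ∀ x, A.V x →ₗ[k] τ.E.V x}
  {δ δ' : Cochain A B}

/-- The pointwise section `s` of `σ` fails to be a morphism by exactly the cochain `δ`. -/
structure IsDefect (σ : SES B A) (s : ∀ x, A.V x →ₗ[k] σ.E.V x) (δ : Cochain A B) : Prop where
  π_section : ∀ x v, σ.π.app x (s x v) = v
  map_section : ∀ {x y : ℕ} (α : Arrow ε x y) (v : A.V x),
    σ.E.map α (s x v) = s y (A.map α v) + σ.ι.app y (δ α v)

theorem exists_isDefect (σ : SES B A) : ∃ s δ, σ.IsDefect s δ := by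
  choose s hs using fun x =>
    (σ.π.app x).exists_rightInverse_of_surjective (LinearMap.range_eq_top.2 (σ.surj x))
  choose l hl using fun x =>
    (σ.ι.app x).exists_leftInverse_of_injective (LinearMap.ker_eq_bot.2 (σ.inj x))
  have hs' x v : σ.π.app x (s x v) = v := LinearMap.congr_fun (hs x) v
  refine ⟨s, fun x y α => l y ∘ₗ (σ.E.map α ∘ₗ s x - s y ∘ₗ A.map α), hs', fun {x y} α v => ?_⟩
  obtain ⟨u, hu⟩ := (σ.exct y (σ.E.map α (s x v) - s y (A.map α v))).1 (by
    rw [map_sub, σ.π.naturality, hs', hs', sub_self])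
  have hlu : l y (σ.ι.app y u) = u := LinearMap.congr_fun (hl y) u
  simp only [LinearMap.comp_apply, LinearMap.sub_apply, ← hu, hlu]
  rw [hu, add_sub_cancel]

theorem IsDefect.exists_retraction (h : σ.IsDefect s δ) :
    ∃ r : ∀ x, σ.E.V x →ₗ[k] B.V x, (∀ x v, r x (σ.ι.app x v) = v) ∧
      ∀ {x y : ℕ} (α : Arrow ε x y) (w : σ.E.V x),
        r y (σ.E.map α w) = B.map α (r x w) + δ α (σ.π.app x w) := by
  choose l hl using fun x =>
    (σ.ι.app x).exists_leftInverse_of_injective (LinearMap.ker_eq_bot.2 (σ.inj x))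
  have hl' x v : l x (σ.ι.app x v) = v := LinearMap.congr_fun (hl x) v
  have hπι x v : σ.π.app x (σ.ι.app x v) = 0 := (σ.exct x _).2 ⟨v, rfl⟩
  let r x : σ.E.V x →ₗ[k] B.V x := l x ∘ₗ (LinearMap.id - s x ∘ₗ σ.π.app x)
  have hr x w : σ.ι.app x (r x w) = w - s x (σ.π.app x w) := by
    obtain ⟨u, hu⟩ := (σ.exct x (w - s x (σ.π.app x w))).1 (by
      rw [map_sub, h.π_section, sub_self])
    change σ.ι.app x (l x (w - s x (σ.π.app x w))) = _
    rw [← hu, hl']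
  refine ⟨r, fun x v => σ.inj x ?_, fun {x y} α w => σ.inj y ?_⟩
  · rw [hr, hπι, map_zero, sub_zero]
  · rw [hr, map_add, σ.ι.naturality, hr, map_sub, h.map_section, σ.π.naturality]
    abel

theorem IsDefect.splits_of_coboundary (h : σ.IsDefect s δ) (g : ∀ x, A.V x →ₗ[k] B.V x)
    (hg : ∀ {x y : ℕ} (α : Arrow ε x y) (v : A.V x),
      δ α v = g y (A.map α v) - B.map α (g x v)) : σ.Splits := by
  obtain ⟨r, hrι, hr⟩ := h.exists_retraction
  refine ⟨.ofArrows (fun x => r x - g x ∘ₗ σ.π.app x) fun α w => ?_, fun x v => ?_⟩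
  · simp only [LinearMap.sub_apply, LinearMap.comp_apply, hr, hg, σ.π.naturality, map_sub]
    abel
  · have hπι : σ.π.app x (σ.ι.app x v) = 0 := (σ.exct x _).2 ⟨v, rfl⟩
    change r x (σ.ι.app x v) - g x (σ.π.app x (σ.ι.app x v)) = v
    rw [hπι, map_zero, sub_zero, hrι]

theorem bijective_of_comm {φ : σ.E.Hom τ.E} {c : k} (hc : c ≠ 0)
    (hι : ∀ x v, φ.app x (σ.ι.app x v) = τ.ι.app x v)
    (hπ : ∀ x v, τ.π.app x (φ.app x v) = c • σ.π.app x v) (x : ℕ) :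
    Function.Bijective (φ.app x) := by
  refine ⟨(injective_iff_map_eq_zero _).2 fun w hw => ?_, fun w' => ?_⟩
  · have hπw : c • σ.π.app x w = 0 := by rw [← hπ, hw, map_zero]
    obtain ⟨u, rfl⟩ := (σ.exct x w).1 ((smul_eq_zero_iff_right hc).1 hπw)
    have hu : τ.ι.app x u = 0 := (hι x u).symm.trans hw
    rw [(map_eq_zero_iff _ (τ.inj x)).1 hu, map_zero]
  · obtain ⟨w, hw⟩ := σ.surj x (c⁻¹ • τ.π.app x w')
    obtain ⟨u, hu⟩ := (τ.exct x (w' - φ.app x w)).1 (by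
      rw [map_sub, hπ, hw, smul_inv_smul₀ hc, sub_self])
    exact ⟨w + σ.ι.app x u, by rw [map_add, hι, hu, add_sub_cancel]⟩

theorem IsDefect.scalarEquiv (h : σ.IsDefect s δ) (h' : τ.IsDefect s' δ') {c : k} (hc : c ≠ 0)
    (hδ : ∀ {x y : ℕ} (α : Arrow ε x y), δ α = c • δ' α) : σ.ScalarEquiv τ := by
  obtain ⟨r, hrι, hr⟩ := h.exists_retraction
  let φ : σ.E.Hom τ.E :=
    .ofArrows (fun x => τ.ι.app x ∘ₗ r x + c • s' x ∘ₗ σ.π.app x) fun {x y} α w => by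
      simp only [LinearMap.add_apply, LinearMap.comp_apply, LinearMap.smul_apply, hr, hδ,
        σ.π.naturality, map_add, map_smul, τ.ι.naturality, h'.map_section, smul_add]
      abel
  have hφ x w : φ.app x w = τ.ι.app x (r x w) + c • s' x (σ.π.app x w) := rfl
  have hι x v : φ.app x (σ.ι.app x v) = τ.ι.app x v := by
    rw [hφ, hrι, (σ.exct x _).2 ⟨v, rfl⟩, map_zero, smul_zero, add_zero]
  have hπ x w : τ.π.app x (φ.app x w) = c • σ.π.app x w := by
    rw [hφ, map_add, (τ.exct x _).2 ⟨_, rfl⟩, map_smul, h'.π_section, zero_add]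
  exact ⟨c, hc, φ, bijective_of_comm hc hι hπ, hι, hπ⟩

end Defect

end SES

theorem ExtZero.of_coboundary (h : ∀ δ : SES.Cochain A B, ∃ g : ∀ x, A.V x →ₗ[k] B.V x,
    ∀ {x y : ℕ} (α : Arrow ε x y) (v : A.V x), δ α v = g y (A.map α v) - B.map α (g x v)) :
    ExtZero A B := by
  intro σ
  obtain ⟨s, δ, hδ⟩ := σ.exists_isDefect
  obtain ⟨g, hg⟩ := h δ
  exact hδ.splits_of_coboundary g hg

theorem ExtOneDimIndecMid.of_cochain {δ₀ : SES.Cochain A B}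
    (hδ₀ : ∀ δ : SES.Cochain A B, ∃ c : k, ∀ {x y : ℕ} (α : Arrow ε x y), δ α = c • δ₀ α)
    (σ : SES B A) (hσ : ¬σ.Splits) (hE : σ.E.Indec) : ExtOneDimIndecMid A B := by
  have key (τ : SES B A) (hτ : ¬τ.Splits) : ∃ s δ, τ.IsDefect s δ ∧ ∃ c : k, c ≠ 0 ∧
      ∀ {x y : ℕ} (α : Arrow ε x y), δ α = c • δ₀ α := by
    obtain ⟨s, δ, h⟩ := τ.exists_isDefect
    obtain ⟨c, hc⟩ := hδ₀ δ
    refine ⟨s, δ, h, c, fun hc0 => hτ (h.splits_of_coboundary (fun _ => 0) fun α v => ?_), hc⟩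
    simp [hc, hc0]
  obtain ⟨s, δ, h, c, hc, hδ⟩ := key σ hσ
  refine ⟨σ, hσ, hE, fun τ hτ => ?_⟩
  obtain ⟨s', δ', h', c', hc', hδ'⟩ := key τ hτ
  refine h.scalarEquiv h' (c := c / c') (div_ne_zero hc hc') fun α => ?_
  rw [hδ, hδ', smul_smul, div_mul_cancel₀ c hc']

/-- The underlying graph of `Q` is a tree, so that every scalar cochain is a coboundary. -/
theorem exists_potential (t : ∀ ⦃x y : ℕ⦄, Arrow ε x y → k) :
    ∃ u : ℕ → k, ∀ {x y : ℕ} (α : Arrow ε x y), t α = u y - u x := by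
  refine ⟨fun x => ∑ ℓ ∈ Finset.range x,
    if h : ε ℓ = true then t (.fwd ℓ h) else -t (.bwd ℓ (by simpa using h)), fun {x y} α => ?_⟩
  cases α with
  | fwd _ h => simp [Finset.sum_range_succ, h]
  | bwd _ h => simp [Finset.sum_range_succ, h]

theorem ExtZero.of_iso (h : ExtZero A B) (hA : A'.Iso A) (hB : B'.Iso B) : ExtZero A' B' := by
  obtain ⟨f, hf⟩ := hA
  obtain ⟨g, hg⟩ := hB.symm
  exact fun σ => (h (σ.transport g hg f hf)).of_transport

theorem ExtOneDimIndecMid.of_iso (h : ExtOneDimIndecMid A B) (hA : A'.Iso A) (hB : B'.Iso B) :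
    ExtOneDimIndecMid A' B' := by
  obtain ⟨f, hf⟩ := hA
  obtain ⟨f', hff', hf'f⟩ := f.exists_inverse hf
  obtain ⟨g, hg⟩ := hB
  obtain ⟨g', hgg', hg'g⟩ := g.exists_inverse hg
  have hf' x : Function.Bijective (f'.app x) :=
    Function.bijective_iff_has_inverse.2 ⟨_, hf'f x, hff' x⟩
  have hg' x : Function.Bijective (g'.app x) :=
    Function.bijective_iff_has_inverse.2 ⟨_, hg'g x, hgg' x⟩
  obtain ⟨σ, hσ, hE, huniv⟩ := h
  refine ⟨σ.transport g hg f' hf', fun h => hσ h.of_transport, hE, fun τ hτ => ?_⟩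
  obtain ⟨c, hc, φ, hφ, hι, hπ⟩ := huniv (τ.transport g' hg' f hf) fun h => hτ h.of_transport
  refine ⟨c, hc, φ, hφ, fun x v => ?_, fun x v => (hf x).1 ?_⟩
  · exact (hι x (g.app x v)).trans (congrArg (τ.ι.app x) (hgg' x v))
  · refine (hπ x v).trans ?_
    rw [map_smul]
    exact congrArg (c • ·) (hf'f x (σ.π.app x v)).symm

theorem AlmostRigidPair.of_iso (h : AlmostRigidPair A B) (hA : A'.Iso A) (hB : B'.Iso B) :
    AlmostRigidPair A' B' :=
  h.imp (·.of_iso hA hB) (·.of_iso hA hB)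

theorem almostRigid_dsum_iff (hM : M.ScalarEnd) (hM0 : ¬M.IsZero) (hN : N.ScalarEnd)
    (hN0 : ¬N.IsZero) (hMN : ¬M.Iso N) :
    AlmostRigid (M.dsum N) ↔ (AlmostRigidPair M M ∧ AlmostRigidPair N N) ∧
      AlmostRigidPair M N ∧ AlmostRigidPair N M := by
  have hMind := hM.indec hM0
  have hNind := hN.indec hN0
  have hMs := ARep.isSummand_dsum_left M N
  have hNs := ARep.isSummand_dsum_right M N
  constructor
  · rintro ⟨-, h⟩
    exact ⟨⟨h M M hMind hMind hMs hMs, h N N hNind hNind hNs hNs⟩,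
      h M N hMind hNind hMs hNs, h N M hNind hMind hNs hMs⟩
  · rintro ⟨⟨hMM, hNN⟩, hMN', hNM⟩
    have iso_or_iso {C : ARep k n ε} (hC : C.Indec) (h : C.IsSummand (M.dsum N)) :
        C.Iso M ∨ C.Iso N := by
      obtain ⟨s, hs⟩ := h.exists_isSection
      exact hC.iso_or_iso_of_isSection hM hN hs
    refine ⟨hM.basic_dsum hN hMN, fun A B hA hB hAs hBs => ?_⟩
    rcases iso_or_iso hA hAs with hA | hA <;> rcases iso_or_iso hB hBs with hB | hB
    exacts [hMM.of_iso hA hB, hMN'.of_iso hA hB, hNM.of_iso hA hB, hNN.of_iso hA hB]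

end Extensions


section Fiber

variable {k : Type} [Field k] {P Q : Prop}

theorem one_mem_fiber (hP : P) : (1 : k) ∈ fiber k P := by
  rw [fiber, if_pos hP]
  exact Submodule.mem_top

theorem eq_zero_of_fiber (hP : ¬P) (v : fiber k P) : v = 0 := by
  have hbot : fiber k P = ⊥ := if_neg hP
  exact Subtype.ext ((Submodule.mem_bot k).1 (hbot ▸ v.2))

theorem finrank_fiber : Module.finrank k (fiber k P) = if P then 1 else 0 := by
  by_cases hP : P
  · rw [fiber, if_pos hP, if_pos hP, finrank_top, Module.finrank_self]
  · rw [fiber, if_neg hP, if_neg hP, finrank_bot]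

theorem coe_fiberMap (v : fiber k P) : (fiberMap k P Q v : k) = if Q then (v : k) else 0 := by
  by_cases hP : P
  · by_cases hQ : Q <;> simp [fiberMap, hP, hQ]
  · simp [eq_zero_of_fiber hP v]

theorem exists_eq_smul_fiberMap (f : fiber k P →ₗ[k] fiber k Q) :
    ∃ c : k, f = c • fiberMap k P Q := by
  by_cases hP : P
  · refine ⟨f ⟨1, one_mem_fiber hP⟩, LinearMap.ext fun v => Subtype.ext ?_⟩
    have hv : v = (v : k) • ⟨1, one_mem_fiber hP⟩ := Subtype.ext (mul_one (v : k)).symm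
    by_cases hQ : Q
    · conv_lhs => rw [hv, map_smul]
      simp [coe_fiberMap, hQ, mul_comm]
    · simp [eq_zero_of_fiber hQ]
  · exact ⟨0, LinearMap.ext fun v => by rw [eq_zero_of_fiber hP v, map_zero, map_zero]⟩

end Fiber

section Intervals

variable {k : Type} [Field k] {n : ℕ} {ε : ℕ → Bool} {i j i' j' x y : ℕ}

/-- The coordinate of a vector of an interval representation. -/
def coord (v : (intervalRep k n ε i j).V x) : k := Subtype.val v

/-- The canonical linear map between fibers of interval representations, which preserves the
coordinate if the target is nonzero. -/
def transition (k : Type) [Field k] (n : ℕ) (ε : ℕ → Bool) (i j i' j' x y : ℕ) :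
    (intervalRep k n ε i j).V x →ₗ[k] (intervalRep k n ε i' j').V y :=
  fiberMap k (SuppCond n i j x) (SuppCond n i' j' y)

theorem coord_injective :
    Function.Injective (coord : (intervalRep k n ε i j).V x → k) :=
  Subtype.val_injective

@[simp] theorem coord_zero : coord (0 : (intervalRep k n ε i j).V x) = 0 := rfl

@[simp] theorem coord_sub (v w : (intervalRep k n ε i j).V x) :
    coord (v - w) = coord v - coord w := rfl

@[simp] theorem coord_smul (c : k) (v : (intervalRep k n ε i j).V x) :
    coord (c • v) = c * coord v := rfl

theorem coord_of_not_suppCond (h : ¬SuppCond n i j x) (v : (intervalRep k n ε i j).V x) :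
    coord v = 0 :=
  congrArg Subtype.val (eq_zero_of_fiber h v)

theorem exists_coord_eq_one (h : SuppCond n i j x) :
    ∃ v : (intervalRep k n ε i j).V x, coord v = 1 :=
  ⟨⟨1, one_mem_fiber h⟩, rfl⟩

theorem coord_transition (v : (intervalRep k n ε i j).V x) :
    coord (transition k n ε i j i' j' x y v) = if SuppCond n i' j' y then coord v else 0 :=
  coe_fiberMap v

theorem map_intervalRep (α : Arrow ε x y) :
    (intervalRep k n ε i j).map α = transition k n ε i j i j x y := by
  cases α with
  | fwd _ h => exact if_pos h
  | bwd _ h => exact if_neg (by simp [h])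

theorem coord_map (α : Arrow ε x y) (v : (intervalRep k n ε i j).V x) :
    coord ((intervalRep k n ε i j).map α v) = if SuppCond n i j y then coord v else 0 := by
  rw [map_intervalRep, coord_transition]

theorem exists_eq_smul_transition
    (f : (intervalRep k n ε i j).V x →ₗ[k] (intervalRep k n ε i' j').V y) :
    ∃ c : k, f = c • transition k n ε i j i' j' x y :=
  exists_eq_smul_fiberMap f

theorem finrank_intervalRep (i j x : ℕ) :
    Module.finrank k ((intervalRep k n ε i j).V x) = if SuppCond n i j x then 1 else 0 :=
  finrank_fiber

theorem supp_intervalRep (i j : ℕ) : (intervalRep k n ε i j).supp = {x | SuppCond n i j x} := by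
  ext x
  constructor
  · rintro ⟨v, hv⟩
    by_contra h
    exact hv (coord_injective (coord_of_not_suppCond h v))
  · intro h
    obtain ⟨v, hv⟩ := exists_coord_eq_one (k := k) (ε := ε) h
    exact ⟨v, fun hv0 => by simp [hv0] at hv⟩

theorem scalarEnd_intervalRep (i j : ℕ) : (intervalRep k n ε i j).ScalarEnd := by
  intro f
  choose c hc using fun x => exists_eq_smul_transition (f.app x)
  have hcoord x v : coord (f.app x v) = c x * coord v := by
    by_cases hx : SuppCond n i j x
    · simp [hc, coord_transition, hx]
    · simp [coord_of_not_suppCond hx]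
  have hconst {x y} (α : Arrow ε x y) (hx : SuppCond n i j x) (hy : SuppCond n i j y) :
      c x = c y := by
    obtain ⟨v, hv⟩ := exists_coord_eq_one (k := k) (ε := ε) hx
    simpa [hcoord, coord_map, hy, hv] using (congrArg coord (f.naturality α v)).symm
  have hc₀ x (hx : max i 1 ≤ x) : SuppCond n i j x → c x = c (max i 1) := by
    induction x, hx using Nat.le_induction with
    | base => exact fun _ => rfl
    | succ x hx ih =>
      intro hx'
      have hx'' : SuppCond n i j x := by simp only [SuppCond] at *; lia
      rw [← ih hx'']
      cases h : ε x with
      | true => exact (hconst (.fwd x h) hx'' hx').symm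
      | false => exact hconst (.bwd x h) hx' hx''
  refine ⟨c (max i 1), fun x v => coord_injective ?_⟩
  by_cases hx : SuppCond n i j x
  · rw [hcoord, coord_smul, hc₀ x (max_le hx.1 hx.2.2.1) hx]
  · simp [coord_of_not_suppCond hx]

/-- Along every arrow from the support of `M(i, j)` to that of `M(i', j')`, the source lies in both
supports if and only if the target does: the condition for the canonical maps to commute with the
structure maps. -/
def OverlapCompatible (n : ℕ) (ε : ℕ → Bool) (i j i' j' : ℕ) : Prop :=
  ∀ {x y : ℕ}, Arrow ε x y → SuppCond n i j x → SuppCond n i' j' y →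
    (SuppCond n i' j' x ↔ SuppCond n i j y)

/-- The morphism given by the canonical maps. -/
def transitionHom (k : Type) [Field k] (h : OverlapCompatible n ε i j i' j') :
    (intervalRep k n ε i j).Hom (intervalRep k n ε i' j') :=
  .ofArrows (fun x => transition k n ε i j i' j' x x) fun {x y} α v => coord_injective <| by
    by_cases hx : SuppCond n i j x
    · by_cases hy : SuppCond n i' j' y
      · simp [coord_transition, coord_map, hy, h α hx hy]
      · simp [coord_transition, coord_map, hy]
    · simp [coord_transition, coord_map, coord_of_not_suppCond hx]

theorem coord_transitionHom (h : OverlapCompatible n ε i j i' j')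
    (v : (intervalRep k n ε i j).V x) :
    coord ((transitionHom k h).app x v) = if SuppCond n i' j' x then coord v else 0 :=
  coord_transition v

theorem eq_zero_of_transitionHom_eq_zero {h : OverlapCompatible n ε i j i' j'}
    (hx : SuppCond n i j x → SuppCond n i' j' x) {v : (intervalRep k n ε i j).V x}
    (hv : (transitionHom k h).app x v = 0) : v = 0 := by
  refine coord_injective ?_
  by_cases hx' : SuppCond n i j x
  · have hcoord := congrArg coord hv
    rwa [coord_transitionHom, if_pos (hx hx')] at hcoord
  · exact coord_of_not_suppCond hx' v

theorem exists_transitionHom_eq (h : OverlapCompatible n ε i j i' j')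
    (hx : SuppCond n i' j' x → SuppCond n i j x) (w : (intervalRep k n ε i' j').V x) :
    ∃ v, (transitionHom k h).app x v = w := by
  refine ⟨transition k n ε i' j' i j x x w, coord_injective ?_⟩
  rw [coord_transitionHom, coord_transition]
  by_cases hx' : SuppCond n i' j' x
  · rw [if_pos hx', if_pos (hx hx')]
  · rw [if_neg hx', coord_of_not_suppCond hx']

end Intervals


section IntervalExtensions

variable {k : Type} [Field k] {n : ℕ} {ε : ℕ → Bool} {i j i' j' : ℕ}

theorem Arrow.eq_succ_or_eq_succ {x y : ℕ} (α : Arrow ε x y) : y = x + 1 ∨ x = y + 1 := by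
  cases α with
  | fwd => exact .inl rfl
  | bwd => exact .inr rfl

theorem extZero_intervalRep_of_exit {z : ℕ}
    (hz : ∀ {x y : ℕ}, Arrow ε x y → SuppCond n i j x → SuppCond n i' j' y →
      (SuppCond n i' j' x ∨ x = z) ∧ (SuppCond n i j y ∨ y = z)) :
    ExtZero (intervalRep k n ε i j) (intervalRep k n ε i' j') := by
  refine .of_coboundary fun δ => ?_
  choose t ht using fun x y (α : Arrow ε x y) => exists_eq_smul_transition (δ α)
  obtain ⟨u, hu⟩ := exists_potential t
  refine ⟨fun x => (u x - u z) • transition k n ε i j i' j' x x, fun {x y} α v =>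
    coord_injective ?_⟩
  by_cases hx : SuppCond n i j x
  · by_cases hy : SuppCond n i' j' y
    · obtain ⟨hx', hy'⟩ := hz α hx hy
      have hgy : (u y - u z) * (if SuppCond n i j y then coord v else 0) =
          (u y - u z) * coord v := by
        rcases hy' with hy' | rfl
        · rw [if_pos hy']
        · simp
      have hgx : (u x - u z) * (if SuppCond n i' j' x then coord v else 0) =
          (u x - u z) * coord v := by
        rcases hx' with hx' | rfl
        · rw [if_pos hx']
        · simp
      simp only [ht, hu, LinearMap.smul_apply, coord_sub, map_smul, coord_smul, coord_transition,
        coord_map, if_pos hy, hgx, hgy]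
      ring
    · rw [coord_of_not_suppCond hy, coord_of_not_suppCond hy]
  · have hv : v = 0 := coord_injective (coord_of_not_suppCond hx v)
    simp [hv]

theorem exists_eq_smul_transition_of_subsingleton
    (h : ∀ {x y x' y' : ℕ}, Arrow ε x y → Arrow ε x' y' → SuppCond n i j x →
      SuppCond n i j x' → SuppCond n i' j' y → SuppCond n i' j' y' → x = x' ∧ y = y')
    (δ : SES.Cochain (intervalRep k n ε i j) (intervalRep k n ε i' j')) :
    ∃ c : k, ∀ {x y : ℕ} (α : Arrow ε x y), δ α = c • transition k n ε i j i' j' x y := by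
  have hzero {x y} (α : Arrow ε x y) (hα : ¬(SuppCond n i j x ∧ SuppCond n i' j' y)) (c : k) :
      δ α = c • transition k n ε i j i' j' x y := by
    refine LinearMap.ext fun v => coord_injective ?_
    rcases not_and_or.1 hα with hx | hy
    · have hv : v = 0 := coord_injective (coord_of_not_suppCond hx v)
      rw [hv, map_zero, map_zero]
    · rw [coord_of_not_suppCond hy, coord_of_not_suppCond hy]
  by_cases hex : ∃ x y, Nonempty (Arrow ε x y) ∧ SuppCond n i j x ∧ SuppCond n i' j' y
  · obtain ⟨x, y, ⟨α⟩, hx, hy⟩ := hex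
    obtain ⟨c, hc⟩ := exists_eq_smul_transition (δ α)
    refine ⟨c, fun {x' y'} α' => ?_⟩
    by_cases hα' : SuppCond n i j x' ∧ SuppCond n i' j' y'
    · obtain ⟨rfl, rfl⟩ := h α α' hx hα'.1 hy hα'.2
      rw [Subsingleton.elim α' α, hc]
    · exact hzero α' hα' c
  · exact ⟨0, fun {x y} α => hzero α (fun hxy => hex ⟨x, y, ⟨α⟩, hxy⟩) 0⟩

end IntervalExtensions

section SegmentExtensions

variable {k : Type} [Field k] {n : ℕ} {ε : ℕ → Bool} {e f : ℕ × ℕ}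

/-- The representation attached to the segment `γ(e.1, e.2)`. -/
abbrev segRep (k : Type) [Field k] (n : ℕ) (ε : ℕ → Bool) (e : ℕ × ℕ) : ARep k n ε :=
  intervalRep k n ε (e.1 + 1) e.2

/-- Of two segments with left endpoints `p a` and `p c`, the first one passes below the second
one where both begin to coexist. -/
def LeftBelow (ε : ℕ → Bool) (a c : ℕ) : Prop := (a < c ∧ ε c = true) ∨ (c < a ∧ ε a = false)

/-- Of two segments with right endpoints `p b` and `p d`, the first one passes above the second
one where both cease to coexist. -/
def RightAbove (ε : ℕ → Bool) (b d : ℕ) : Prop :=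
  (d < b ∧ ε d = false) ∨ (b < d ∧ ε b = true)

/-- Going from left to right, the segment `e` crosses `f` upwards. -/
def CrossesUpward (ε : ℕ → Bool) (e f : ℕ × ℕ) : Prop :=
  f.1 < e.2 ∧ e.1 < f.2 ∧ LeftBelow ε e.1 f.1 ∧ RightAbove ε e.2 f.2

/-- Variant of `CrossesUpward` which allows one segment to end where the other one begins. This
is the condition for a nonsplit extension of `segRep k n ε e` by `segRep k n ε f` to exist. -/
def TouchesUpward (ε : ℕ → Bool) (e f : ℕ × ℕ) : Prop :=
  f.1 ≤ e.2 ∧ e.1 ≤ f.2 ∧ LeftBelow ε e.1 f.1 ∧ RightAbove ε e.2 f.2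

theorem LeftBelow.or_swap {a c : ℕ} (h : a ≠ c) : LeftBelow ε a c ∨ LeftBelow ε c a := by
  grind [LeftBelow]

theorem RightAbove.or_swap {b d : ℕ} (h : b ≠ d) : RightAbove ε b d ∨ RightAbove ε d b := by
  grind [RightAbove]

theorem not_isZero_segRep (he : ValidPair n e) : ¬(segRep k n ε e).IsZero := by
  intro h
  have hsupp : SuppCond n (e.1 + 1) e.2 e.2 := ⟨he.1, le_rfl, by have := he.1; lia, he.2⟩
  obtain ⟨v, hv⟩ := exists_coord_eq_one (k := k) (ε := ε) hsupp
  exact zero_ne_one ((congrArg coord (h e.2 v)).symm.trans hv)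

theorem isZero_segRep (h : e.2 ≤ e.1) : (segRep k n ε e).IsZero := fun x v =>
  coord_injective (coord_of_not_suppCond (fun hx => by simp only [SuppCond] at hx; lia) v)

theorem indec_segRep (he : ValidPair n e) : (segRep k n ε e).Indec :=
  (scalarEnd_intervalRep _ _).indec (not_isZero_segRep he)

theorem eq_of_segRep_iso (he : ValidPair n e) (hf : f.2 ≤ n + 2)
    (h : (segRep k n ε e).Iso (segRep k n ε f)) : e = f := by
  have hsupp (x : ℕ) : SuppCond n (e.1 + 1) e.2 x ↔ SuppCond n (f.1 + 1) f.2 x := by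
    have hmem := Set.ext_iff.1 h.supp_eq x
    rwa [supp_intervalRep, supp_intervalRep] at hmem
  have h₁ := hsupp (e.1 + 1)
  have h₂ := hsupp e.2
  have h₃ := hsupp (f.1 + 1)
  have h₄ := hsupp f.2
  simp only [SuppCond] at h₁ h₂ h₃ h₄
  obtain ⟨he₁, he₂⟩ := he
  exact Prod.ext (by lia) (by lia)

theorem LeftBelow.overlapCompatible {a c : ℕ} (h : LeftBelow ε a c) (d : ℕ) :
    OverlapCompatible n ε (c + 1) d (a + 1) d := by
  intro x y α
  simp only [LeftBelow] at h
  cases α <;> grind [SuppCond]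

theorem RightAbove.overlapCompatible {b d : ℕ} (h : RightAbove ε b d) (c : ℕ) :
    OverlapCompatible n ε (c + 1) d (c + 1) b := by
  intro x y α
  simp only [RightAbove] at h
  cases α <;> grind [SuppCond]

/-- The extension of `segRep k n ε e` by `segRep k n ε f` whose middle term is given by the two
segments resolving the crossing. -/
def TouchesUpward.ses (h : TouchesUpward ε e f) (k : Type) [Field k] (he : ValidPair n e)
    (hf : ValidPair n f) : SES (segRep k n ε f) (segRep k n ε e) :=
  .ofSquare (X := segRep k n ε (e.1, f.2)) (Y := segRep k n ε (f.1, e.2))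
    (transitionHom k (h.2.2.1.overlapCompatible f.2))
    (transitionHom k (h.2.2.2.overlapCompatible f.1))
    (transitionHom k (h.2.2.2.overlapCompatible e.1))
    (transitionHom k (h.2.2.1.overlapCompatible e.2))
    (fun x v h₁ h₂ => by
      by_cases hx : SuppCond n (e.1 + 1) f.2 x
      · exact eq_zero_of_transitionHom_eq_zero (fun _ => hx) h₁
      · exact eq_zero_of_transitionHom_eq_zero (by grind [SuppCond, ValidPair]) h₂)
    (fun x w => by
      by_cases hx : SuppCond n (e.1 + 1) f.2 x
      · obtain ⟨u, hu⟩ := exists_transitionHom_eq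
          (h.2.2.2.overlapCompatible (n := n) e.1) (fun _ => hx) w
        exact ⟨u, 0, by rw [hu, map_zero, add_zero]⟩
      · obtain ⟨v, hv⟩ := exists_transitionHom_eq
          (h.2.2.1.overlapCompatible (n := n) e.2) (by grind [SuppCond, ValidPair]) w
        exact ⟨0, v, by rw [hv, map_zero, zero_add]⟩)
    (fun x v => coord_injective <| by
      simp only [coord_transitionHom]
      by_cases hx : SuppCond n (f.1 + 1) f.2 x
      · grind [SuppCond]
      · simp [coord_of_not_suppCond hx])
    (fun x => by
      have := h.1
      have := h.2.1
      simp only [finrank_intervalRep]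
      grind [SuppCond, ValidPair])

theorem TouchesUpward.not_splits (h : TouchesUpward ε e f) (he : ValidPair n e)
    (hf : ValidPair n f) : ¬(h.ses k he hf).Splits := by
  intro hsplit
  rcases (indec_segRep hf).iso_or_iso_of_isSection (scalarEnd_intervalRep _ _)
    (scalarEnd_intervalRep _ _) hsplit with hiso | hiso
  · have := congrArg Prod.fst (eq_of_segRep_iso (f := (e.1, f.2)) hf hf.2 hiso)
    grind [TouchesUpward, LeftBelow]
  · have := congrArg Prod.snd (eq_of_segRep_iso (f := (f.1, e.2)) hf he.2 hiso)
    grind [TouchesUpward, RightAbove]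

theorem CrossesUpward.touchesUpward (h : CrossesUpward ε e f) : TouchesUpward ε e f :=
  ⟨h.1.le, h.2.1.le, h.2.2⟩

theorem CrossesUpward.not_almostRigidPair (h : CrossesUpward ε e f) (he : ValidPair n e)
    (hf : ValidPair n f) : ¬AlmostRigidPair (segRep k n ε e) (segRep k n ε f) := by
  have hσ := h.touchesUpward.not_splits (k := k) he hf
  rintro (hzero | ⟨τ, -, hE, huniv⟩)
  · exact hσ (hzero _)
  · obtain ⟨-, -, φ, hφ, -⟩ := huniv _ hσ
    rcases hE.2 _ _ ⟨φ, hφ⟩ with hX | hY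
    · exact not_isZero_segRep (e := (e.1, f.2)) ⟨h.2.1, hf.2⟩ hX
    · exact not_isZero_segRep (e := (f.1, e.2)) ⟨h.1, he.2⟩ hY

theorem TouchesUpward.extOneDimIndecMid (h : TouchesUpward ε e f)
    (hend : f.1 = e.2 ∨ f.2 = e.1) (he : ValidPair n e) (hf : ValidPair n f) :
    ExtOneDimIndecMid (segRep k n ε e) (segRep k n ε f) := by
  refine .of_cochain (exists_eq_smul_transition_of_subsingleton
    fun {x y x' y'} α α' hx hx' hy hy' => ?_) (h.ses k he hf) (h.not_splits he hf) ?_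
  · have hα := α.eq_succ_or_eq_succ
    have hα' := α'.eq_succ_or_eq_succ
    simp only [SuppCond] at hx hx' hy hy'
    lia
  · rcases hend with hend | hend
    · have hE : (h.ses k he hf).E.Iso (segRep k n ε (e.1, f.2)) :=
        ARep.dsum_iso_left (isZero_segRep hend.ge)
      exact ((scalarEnd_intervalRep _ _).of_iso hE).indec fun hzero =>
        not_isZero_segRep (e := (e.1, f.2)) ⟨(he.1.trans_eq hend.symm).trans hf.1, hf.2⟩
          (hE.symm.isZero hzero)
    · have hE : (h.ses k he hf).E.Iso (segRep k n ε (f.1, e.2)) :=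
        ARep.dsum_iso_right (isZero_segRep hend.le)
      exact ((scalarEnd_intervalRep _ _).of_iso hE).indec fun hzero =>
        not_isZero_segRep (e := (f.1, e.2)) ⟨(hf.1.trans_eq hend).trans he.1, he.2⟩
          (hE.symm.isZero hzero)

theorem extZero_of_not_touchesUpward (h : ¬TouchesUpward ε e f) :
    ExtZero (segRep k n ε e) (segRep k n ε f) := by
  by_cases hR : RightAbove ε e.2 f.2
  · refine extZero_intervalRep_of_exit (z := min e.2 f.2 + 1) fun {x y} α hx hy => ?_
    simp only [TouchesUpward, RightAbove, LeftBelow] at *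
    cases α <;> grind [SuppCond, ValidPair]
  · refine extZero_intervalRep_of_exit (z := max e.1 f.1) fun {x y} α hx hy => ?_
    simp only [RightAbove] at *
    cases α <;> grind [SuppCond, ValidPair]

theorem almostRigidPair_segRep_iff (he : ValidPair n e) (hf : ValidPair n f) :
    AlmostRigidPair (segRep k n ε e) (segRep k n ε f) ↔ ¬CrossesUpward ε e f := by
  refine ⟨fun h hcross => hcross.not_almostRigidPair he hf h, fun hcross => ?_⟩
  by_cases h : TouchesUpward ε e f
  · have hend : f.1 = e.2 ∨ f.2 = e.1 := by
      by_contra! hend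
      exact hcross ⟨h.1.lt_of_ne hend.1, h.2.1.lt_of_ne' hend.2, h.2.2⟩
    exact .inr (h.extOneDimIndecMid hend he hf)
  · exact .inl (extZero_of_not_touchesUpward h)

theorem not_crossesUpward_self (ε : ℕ → Bool) (e : ℕ × ℕ) : ¬CrossesUpward ε e e := by
  simp [CrossesUpward, LeftBelow]

theorem almostRigid_dsum_segRep_iff (he : ValidPair n e) (hf : ValidPair n f) (hef : e ≠ f) :
    AlmostRigid ((segRep k n ε e).dsum (segRep k n ε f)) ↔
      ¬CrossesUpward ε e f ∧ ¬CrossesUpward ε f e := by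
  rw [almostRigid_dsum_iff (scalarEnd_intervalRep _ _) (not_isZero_segRep he)
      (scalarEnd_intervalRep _ _) (not_isZero_segRep hf)
      fun h => hef (eq_of_segRep_iso he hf.2 h),
    almostRigidPair_segRep_iff he he, almostRigidPair_segRep_iff hf hf,
    almostRigidPair_segRep_iff he hf, almostRigidPair_segRep_iff hf he]
  simp only [not_crossesUpward_self, not_false_eq_true, true_and]

end SegmentExtensions


section Crossings

variable {n : ℕ} {ε : ℕ → Bool} {p : ℕ → ℂ} {e f : ℕ × ℕ} {a b x : ℕ} {s t : ℝ}

/-- The height of the line carrying `γ(e.1, e.2)` above the abscissa `t`. -/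
def height (p : ℕ → ℂ) (e : ℕ × ℕ) (t : ℝ) : ℝ :=
  (p e.1).im + slope p e * (t - (p e.1).re)

theorem height_fst (p : ℕ → ℂ) (e : ℕ × ℕ) : height p e (p e.1).re = (p e.1).im := by
  simp [height]

theorem height_snd (h : (p e.1).re < (p e.2).re) : height p e (p e.2).re = (p e.2).im := by
  rw [height, slope, div_mul_cancel₀ _ (sub_pos.2 h).ne', add_sub_cancel]

theorem height_eq_add (p : ℕ → ℂ) (e : ℕ × ℕ) (s t : ℝ) :
    height p e t = height p e s + slope p e * (t - s) := by
  unfold height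
  ring

theorem continuous_height (p : ℕ → ℂ) (e : ℕ × ℕ) : Continuous (height p e) := by
  unfold height
  fun_prop

theorem mem_Seg_iff (h : (p e.1).re < (p e.2).re) {z : ℂ} :
    z ∈ Seg p e ↔ z.re ∈ Set.Icc (p e.1).re (p e.2).re ∧ z.im = height p e z.re := by
  have hpos := sub_pos.2 h
  rw [Seg, segment_eq_image', Set.mem_image]
  constructor
  · rintro ⟨θ, ⟨hθ₀, hθ₁⟩, rfl⟩
    refine ⟨⟨?_, ?_⟩, ?_⟩
    · simpa using mul_nonneg hθ₀ hpos.le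
    · simpa [← le_sub_iff_add_le'] using mul_le_of_le_one_left hpos.le hθ₁
    · simp only [height, slope, Complex.add_re, Complex.add_im, Complex.smul_re, Complex.smul_im,
        Complex.sub_re, Complex.sub_im, smul_eq_mul]
      field_simp
      ring
  · rintro ⟨⟨hz₁, hz₂⟩, hz⟩
    refine ⟨(z.re - (p e.1).re) / ((p e.2).re - (p e.1).re), ⟨?_, ?_⟩, Complex.ext ?_ ?_⟩
    · exact div_nonneg (sub_nonneg.2 hz₁) hpos.le
    · exact (div_le_one hpos).2 (sub_le_sub_right hz₂ _)
    · rw [Complex.add_re, Complex.smul_re, Complex.sub_re, smul_eq_mul,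
        div_mul_cancel₀ _ hpos.ne', add_sub_cancel]
    · rw [hz, height, slope, Complex.add_im, Complex.smul_im, Complex.sub_im, smul_eq_mul]
      ring

theorem exists_height_eq_iff
    (h : s < t → height p e s ≠ height p f s ∨ height p e t ≠ height p f t) :
    (∃ x ∈ Set.Ioo s t, height p e x = height p f x) ↔
      s < t ∧ ((height p e s < height p f s ∧ height p f t < height p e t) ∨
        (height p f s < height p e s ∧ height p e t < height p f t)) := by
  constructor
  · rintro ⟨x, ⟨hsx, hxt⟩, hx⟩
    have hst := hsx.trans hxt
    have hgap (y : ℝ) : height p e y - height p f y = (slope p e - slope p f) * (y - x) := by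
      rw [height_eq_add p e x, height_eq_add p f x, hx]
      ring
    have hs := hgap s
    have ht := hgap t
    rcases lt_trichotomy (slope p e) (slope p f) with hlt | heq | hgt
    · exact ⟨hst, .inr ⟨by nlinarith, by nlinarith⟩⟩
    · rw [heq, sub_self, zero_mul, sub_eq_zero] at hs ht
      exact absurd (h hst) (by simp [hs, ht])
    · exact ⟨hst, .inl ⟨by nlinarith, by nlinarith⟩⟩
  · have hcont : Continuous fun x => height p e x - height p f x :=
      (continuous_height p e).sub (continuous_height p f)
    rintro ⟨hst, ⟨hs, ht⟩ | ⟨hs, ht⟩⟩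
    · obtain ⟨x, hx, hx'⟩ := intermediate_value_Ioo hst.le hcont.continuousOn
        ⟨sub_neg.2 hs, sub_pos.2 ht⟩
      exact ⟨x, hx, sub_eq_zero.1 hx'⟩
    · obtain ⟨x, hx, hx'⟩ := intermediate_value_Ioo' hst.le hcont.continuousOn
        ⟨sub_neg.2 ht, sub_pos.2 hs⟩
      exact ⟨x, hx, sub_eq_zero.1 hx'⟩

theorem convex_mk_preimage {H : Set ℂ} (hH : Convex ℝ H) (t : ℝ) :
    Convex ℝ (Complex.mk t ⁻¹' H) := by
  intro y hy y' hy' α β hα hβ hαβ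
  have h := hH hy hy' hα hβ hαβ
  rw [Set.mem_preimage]
  convert h using 1
  refine Complex.ext ?_ ?_
  · simp [← add_mul, hαβ]
  · simp

namespace PolyPts

theorem strictMonoOn_re (hp : PolyPts n ε p) :
    StrictMonoOn (fun a => (p a).re) (Set.Iic (n + 2)) :=
  fun a _ b hb hab => hp.1 a b hab hb

theorem re_lt (hp : PolyPts n ε p) (he : ValidPair n e) : (p e.1).re < (p e.2).re :=
  hp.1 e.1 e.2 he.1 he.2

theorem Seg_subset_convexHull (hx₁ : e.1 ≠ x) (hx₂ : e.2 ≠ x) (he : ValidPair n e) :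
    Seg p e ⊆ convexHull ℝ (p '' {y | y ≤ n + 2 ∧ y ≠ x}) :=
  segment_subset_convexHull ⟨e.1, ⟨he.1.le.trans he.2, hx₁⟩, rfl⟩ ⟨e.2, ⟨he.2, hx₂⟩, rfl⟩

theorem eq_or_eq_of_mem_Seg (hp : PolyPts n ε p) (he : ValidPair n e) (hx : x ≤ n + 2)
    (h : p x ∈ Seg p e) : x = e.1 ∨ x = e.2 := by
  by_contra! hne
  exact hp.2.2.2 x hx (Seg_subset_convexHull hne.1.symm hne.2.symm he h)

theorem mk_height_mem_Seg (hp : PolyPts n ε p) (he : ValidPair n e) (hx₁ : e.1 < x)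
    (hx₂ : x < e.2) : (⟨(p x).re, height p e (p x).re⟩ : ℂ) ∈ Seg p e :=
  (mem_Seg_iff (hp.re_lt he)).2
    ⟨⟨(hp.1 _ _ hx₁ (hx₂.le.trans he.2)).le, (hp.1 _ _ hx₂ he.2).le⟩, rfl⟩

theorem height_zero_last (hp : PolyPts n ε p) (t : ℝ) : height p (0, n + 2) t = (p 0).im := by
  simp [height, slope, hp.2.1]

-- Otherwise `p x` would lie on the vertical segment joining `L` to the chord, both of which are
-- in the convex hull of the other vertices.
theorem im_notMem_uIcc (hp : PolyPts n ε p) (he : ValidPair n e) (hx₁ : e.1 < x)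
    (hx₂ : x < e.2) : (p x).im ∉ Set.uIcc (p 0).im (height p e (p x).re) := by
  intro hmem
  have hx₀ : 0 < x := by lia
  have hxn : x < n + 2 := hx₂.trans_le he.2
  have hvalid : ValidPair n (0, n + 2) := ⟨by simp, le_rfl⟩
  have hL := hp.mk_height_mem_Seg hvalid hx₀ hxn
  rw [hp.height_zero_last] at hL
  refine hp.2.2.2 x hxn.le ((convex_mk_preimage (convex_convexHull ℝ _) _).ordConnected.uIcc_subset
    (Seg_subset_convexHull hx₀.ne hxn.ne' hvalid hL)
    (Seg_subset_convexHull hx₁.ne hx₂.ne' he (hp.mk_height_mem_Seg he hx₁ hx₂)) hmem)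

theorem height_lt_im_iff (hp : PolyPts n ε p) (he : ValidPair n e) (hx₁ : e.1 < x)
    (hx₂ : x < e.2) : height p e (p x).re < (p x).im ↔ ε x = true := by
  have hx := hp.im_notMem_uIcc he hx₁ hx₂
  have hL := hp.2.2.1 x (by lia) (by have := he.2; lia)
  rw [Set.mem_uIcc, not_or, not_and, not_and] at hx
  cases h : ε x with
  | true => simpa using hx.1 (hL.1 h).le
  | false => simpa using (not_le.1 fun hle => hx.2 hle (hL.2 h).le).le

theorem im_lt_height_iff (hp : PolyPts n ε p) (he : ValidPair n e) (hx₁ : e.1 < x)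
    (hx₂ : x < e.2) : (p x).im < height p e (p x).re ↔ ε x = false := by
  have hx := hp.im_notMem_uIcc he hx₁ hx₂
  have hlt := hp.height_lt_im_iff he hx₁ hx₂
  have hne : (p x).im ≠ height p e (p x).re := fun h => hx (h ▸ Set.right_mem_uIcc)
  rw [← Bool.not_eq_true, ← hlt, not_lt, hne.le_iff_lt]

theorem height_lt_height_left_iff (hp : PolyPts n ε p) (he : ValidPair n e)
    (hf : ValidPair n f) (hfe : f.1 < e.2) (hef : e.1 < f.2) :
    height p e (p (max e.1 f.1)).re < height p f (p (max e.1 f.1)).re ↔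
      LeftBelow ε e.1 f.1 := by
  rcases lt_trichotomy e.1 f.1 with h | h | h
  · rw [max_eq_right h.le, height_fst, hp.height_lt_im_iff he h hfe]
    simp [LeftBelow, h, h.not_gt]
  · rw [h, max_self, height_fst, ← h, height_fst, h]
    simp [LeftBelow]
  · rw [max_eq_left h.le, height_fst, hp.im_lt_height_iff hf h hef]
    simp [LeftBelow, h, h.not_gt]

theorem height_lt_height_right_iff (hp : PolyPts n ε p) (he : ValidPair n e)
    (hf : ValidPair n f) (hfe : f.1 < e.2) (hef : e.1 < f.2) :
    height p f (p (min e.2 f.2)).re < height p e (p (min e.2 f.2)).re ↔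
      RightAbove ε e.2 f.2 := by
  have he' := hp.re_lt he
  have hf' := hp.re_lt hf
  rcases lt_trichotomy e.2 f.2 with h | h | h
  · rw [min_eq_left h.le, height_snd he', hp.height_lt_im_iff hf hfe h]
    simp [RightAbove, h, h.not_gt]
  · rw [h, min_self, height_snd hf', ← h, height_snd he', h]
    simp [RightAbove]
  · rw [min_eq_right h.le, height_snd hf', hp.im_lt_height_iff he hef h]
    simp [RightAbove, h, h.not_gt]

theorem height_ne_height_left (hp : PolyPts n ε p) (he : ValidPair n e) (hf : ValidPair n f)
    (hfe : f.1 < e.2) (hef : e.1 < f.2) (hne : e.1 ≠ f.1) :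
    height p e (p (max e.1 f.1)).re ≠ height p f (p (max e.1 f.1)).re := by
  rcases LeftBelow.or_swap (ε := ε) hne with h | h
  · exact ((hp.height_lt_height_left_iff he hf hfe hef).2 h).ne
  · rw [max_comm]
    exact ((hp.height_lt_height_left_iff hf he hef hfe).2 h).ne'

theorem height_ne_height_right (hp : PolyPts n ε p) (he : ValidPair n e) (hf : ValidPair n f)
    (hfe : f.1 < e.2) (hef : e.1 < f.2) (hne : e.2 ≠ f.2) :
    height p e (p (min e.2 f.2)).re ≠ height p f (p (min e.2 f.2)).re := by
  rcases RightAbove.or_swap (ε := ε) hne with h | h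
  · exact ((hp.height_lt_height_right_iff he hf hfe hef).2 h).ne'
  · rw [min_comm]
    exact ((hp.height_lt_height_right_iff hf he hef hfe).2 h).ne

theorem re_max_lt_re_min_iff (hp : PolyPts n ε p) (he : ValidPair n e) (hf : ValidPair n f) :
    (p (max e.1 f.1)).re < (p (min e.2 f.2)).re ↔ f.1 < e.2 ∧ e.1 < f.2 := by
  obtain ⟨he₁, he₂⟩ := he
  obtain ⟨hf₁, hf₂⟩ := hf
  rw [hp.strictMonoOn_re.lt_iff_lt (Set.mem_Iic.2 (by lia)) (Set.mem_Iic.2 (by lia))]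
  lia

theorem crossesUpward_iff (hp : PolyPts n ε p) (he : ValidPair n e) (hf : ValidPair n f) :
    CrossesUpward ε e f ↔ (p (max e.1 f.1)).re < (p (min e.2 f.2)).re ∧
      height p e (p (max e.1 f.1)).re < height p f (p (max e.1 f.1)).re ∧
      height p f (p (min e.2 f.2)).re < height p e (p (min e.2 f.2)).re := by
  rw [hp.re_max_lt_re_min_iff he hf, CrossesUpward, ← and_assoc]
  refine and_congr_right fun ⟨hfe, hef⟩ => ?_
  rw [hp.height_lt_height_left_iff he hf hfe hef, hp.height_lt_height_right_iff he hf hfe hef]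

theorem endpoint_of_mem_Seg (hp : PolyPts n ε p) (he : ValidPair n e) (hf : ValidPair n f)
    {z : ℂ} (hz : z = p e.1 ∨ z = p e.2) (hzf : z ∈ Seg p f) : z = p f.1 ∨ z = p f.2 := by
  rcases hz with rfl | rfl
  · exact (hp.eq_or_eq_of_mem_Seg hf (he.1.le.trans he.2) hzf).imp (congrArg p) (congrArg p)
  · exact (hp.eq_or_eq_of_mem_Seg hf he.2 hzf).imp (congrArg p) (congrArg p)

theorem re_mem_Ioo_of_mem_Seg (hp : PolyPts n ε p) (he : ValidPair n e) {z : ℂ}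
    (hz : z ∈ Seg p e) (hend : ¬(z = p e.1 ∨ z = p e.2)) :
    z.re ∈ Set.Ioo (p e.1).re (p e.2).re := by
  obtain ⟨⟨hz₁, hz₂⟩, hz⟩ := (mem_Seg_iff (hp.re_lt he)).1 hz
  rw [not_or] at hend
  refine ⟨hz₁.lt_of_ne' fun h => hend.1 (Complex.ext h ?_),
    hz₂.lt_of_ne fun h => hend.2 (Complex.ext h ?_)⟩
  · rw [hz, h, height_fst]
  · rw [hz, h, height_snd (hp.re_lt he)]

theorem Ioo_re_max_min (hp : PolyPts n ε p) (he : ValidPair n e) (hf : ValidPair n f) :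
    Set.Ioo (p (max e.1 f.1)).re (p (min e.2 f.2)).re =
      Set.Ioo (p e.1).re (p e.2).re ∩ Set.Ioo (p f.1).re (p f.2).re := by
  have hmono := hp.strictMonoOn_re.monotoneOn
  rw [Set.Ioo_inter_Ioo]
  congr 1
  · exact hmono.map_max (he.1.le.trans he.2) (hf.1.le.trans hf.2)
  · exact hmono.map_min he.2 hf.2

theorem cross_iff_exists_height_eq (hp : PolyPts n ε p) (he : ValidPair n e)
    (hf : ValidPair n f) :
    Cross p e f ↔ ∃ x ∈ Set.Ioo (p (max e.1 f.1)).re (p (min e.2 f.2)).re,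
      height p e x = height p f x := by
  rw [hp.Ioo_re_max_min he hf]
  constructor
  · rintro ⟨z, hze, hzf, hz⟩
    have hze' := hp.re_mem_Ioo_of_mem_Seg he hze fun h =>
      hz ⟨h, hp.endpoint_of_mem_Seg he hf h hzf⟩
    have hzf' := hp.re_mem_Ioo_of_mem_Seg hf hzf fun h =>
      hz ⟨hp.endpoint_of_mem_Seg hf he h hze, h⟩
    exact ⟨z.re, ⟨hze', hzf'⟩, ((mem_Seg_iff (hp.re_lt he)).1 hze).2.symm.trans
      ((mem_Seg_iff (hp.re_lt hf)).1 hzf).2⟩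
  · rintro ⟨x, ⟨hxe, hxf⟩, hx⟩
    refine ⟨⟨x, height p e x⟩,
      (mem_Seg_iff (hp.re_lt he)).2 ⟨Set.Ioo_subset_Icc_self hxe, rfl⟩,
      (mem_Seg_iff (hp.re_lt hf)).2 ⟨Set.Ioo_subset_Icc_self hxf, hx⟩, fun ⟨hz, _⟩ => ?_⟩
    rcases hz with hz | hz
    · exact hxe.1.ne' (congrArg Complex.re hz)
    · exact hxe.2.ne (congrArg Complex.re hz)

theorem cross_iff_crossesUpward (hp : PolyPts n ε p) (he : ValidPair n e) (hf : ValidPair n f)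
    (hne : e ≠ f) : Cross p e f ↔ CrossesUpward ε e f ∨ CrossesUpward ε f e := by
  have hends (hst : (p (max e.1 f.1)).re < (p (min e.2 f.2)).re) :
      height p e (p (max e.1 f.1)).re ≠ height p f (p (max e.1 f.1)).re ∨
        height p e (p (min e.2 f.2)).re ≠ height p f (p (min e.2 f.2)).re := by
    obtain ⟨hfe, hef⟩ := (hp.re_max_lt_re_min_iff he hf).1 hst
    by_cases h : e.1 = f.1
    · exact .inr (hp.height_ne_height_right he hf hfe hef fun h' => hne (Prod.ext h h'))
    · exact .inl (hp.height_ne_height_left he hf hfe hef h)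
  rw [hp.cross_iff_exists_height_eq he hf, exists_height_eq_iff hends, and_or_left,
    hp.crossesUpward_iff he hf, hp.crossesUpward_iff hf he, max_comm f.1, min_comm f.2]

end PolyPts

end Crossings

/-- for non-isomorphic indecomposables `M(i,j)`, `M(i′,j′)`, the direct sum
`M(i,j) ⊕ M(i′,j′)` is almost rigid iff `γ(i−1,j)` and `γ(i′−1,j′)` do not cross. -/
theorem stmt_12 (k : Type) [Field k] (n : ℕ) (ε : ℕ → Bool) (p : ℕ → ℂ)
    (hp : PolyPts n ε p) (i j i' j' : ℕ)
    (h1 : 1 ≤ i) (h2 : i ≤ j) (h3 : j ≤ n + 2)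
    (h4 : 1 ≤ i') (h5 : i' ≤ j') (h6 : j' ≤ n + 2) (hne : (i, j) ≠ (i', j')) :
    AlmostRigid ((intervalRep k n ε i j).dsum (intervalRep k n ε i' j')) ↔
      ¬Cross p (i - 1, j) (i' - 1, j') := by
  obtain ⟨a, rfl⟩ := Nat.exists_eq_add_of_le' h1
  obtain ⟨c, rfl⟩ := Nat.exists_eq_add_of_le' h4
  have he : ValidPair n (a, j) := ⟨h2, h3⟩
  have hf : ValidPair n (c, j') := ⟨h5, h6⟩
  have hef : (a, j) ≠ (c, j') := by simpa using hne
  calc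
    _ ↔ ¬CrossesUpward ε (a, j) (c, j') ∧ ¬CrossesUpward ε (c, j') (a, j) :=
      almostRigid_dsum_segRep_iff he hf hef
    _ ↔ ¬Cross p (a, j) (c, j') := by rw [hp.cross_iff_crossesUpward he hf hef, not_or]

end CambrianA
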